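/- Let a = (a_n)_{n≥1} be a non-ultimately periodic sequence over F_q[T] with deg a_n ≥ 1 for all n ≥ 1, set ξ := [0, a_1, a_2, …] ∈ F_q((T^{-1})) with convergents (p_n/q_n), and assume the sequence (|q_n|^{1/n})_{n≥1} is bounded. Put m := liminf_{n→∞} |q_n|^{1/n} and M := limsup_{n→∞} |q_n|^{1/n}. Then w_2(ξ) ≥ w_2*(ξ) ≥ max(2, (log m/log M)·Dio(a) − 1); in particular, if (|q_n|^{1/n})_{n≥1} converges, then w_2(ξ) ≥ w_2*(ξ) ≥ max(2, Dio(a) − 1). Furthermore, if in addition the sequence (|a_n|)_{n≥1} is bounded, then w_2(ξ) ≥ max(2, (log m/log M)·(Dio(a)+1) − 1); in particular, if (|q_n|^{1/n})_{n≥1} converges, then w_2(ξ) ≥ max(2, Dio(a)). -/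

import Mathlib

open Polynomial Filter
open scoped ENNReal

noncomputable section

namespace Ooto

variable (Fq : Type) [Field Fq] [Fintype Fq]

/-- `F_q((T⁻¹))`, realized as formal Laurent series in the variable `X = T⁻¹`. -/
abbrev K := LaurentSeries Fq

/-- The element `T = X⁻¹` of `F_q((T⁻¹))`. -/
def TT : K Fq := HahnSeries.single (-1 : ℤ) (1 : Fq)

/-- The natural embedding of `F_q[T]` into `F_q((T⁻¹))`, sending `T` to `T`. -/
def polyToK : Polynomial Fq →+* K Fq := Polynomial.eval₂RingHom HahnSeries.C (TT Fq)

open Classical in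
/-- The absolute value on `F_q((T⁻¹))`: `|0| = 0` and `|ξ| = q^{-N}` where `N` is the order
of `ξ` as a series in `T⁻¹`. -/
def kabs (f : K Fq) : ℝ := if f = 0 then 0 else (Fintype.card Fq : ℝ) ^ (-f.order)

/-- A fixed algebraic closure of `F_q((T⁻¹))`. -/
abbrev L := AlgebraicClosure (K Fq)

def toL : K Fq →+* L Fq := algebraMap (K Fq) (L Fq)

def φ : Polynomial Fq →+* L Fq := (toL Fq).comp (polyToK Fq)

/-- Evaluation of `P ∈ (F_q[T])[X]` at `ξ ∈ F_q((T⁻¹))`. -/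
def evalK (P : Polynomial (Polynomial Fq)) (ξ : K Fq) : K Fq :=
  Polynomial.eval₂ (polyToK Fq) ξ P

/-- Evaluation of `P ∈ (F_q[T])[X]` at a point of the algebraic closure. -/
def evalL (P : Polynomial (Polynomial Fq)) (α : L Fq) : L Fq :=
  Polynomial.eval₂ (φ Fq) α P

/-- Height of a polynomial over `F_q[T]`: the maximum of the absolute values of its
coefficients. -/
def Hpoly (P : Polynomial (Polynomial Fq)) : ℝ := ⨆ i : ℕ, kabs Fq (polyToK Fq (P.coeff i))

/-- `P` is the minimal polynomial of `α`: a non-constant irreducible primitive polynomial in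
`(F_q[T])[X]` whose leading coefficient is monic in `T`, vanishing at `α`. -/
def IsMinPolyOf (P : Polynomial (Polynomial Fq)) (α : L Fq) : Prop :=
  0 < P.natDegree ∧ Irreducible P ∧ P.IsPrimitive ∧ (P.leadingCoeff).Monic ∧ evalL Fq P α = 0

/-- `α` is algebraic over `F_q(T)`. -/
def IsAlgElem (α : L Fq) : Prop := ∃ P, IsMinPolyOf Fq P α

open Classical in
/-- The minimal polynomial of an algebraic element (junk value `0` otherwise). -/
def minPolyPrim (α : L Fq) : Polynomial (Polynomial Fq) :=
  if h : IsAlgElem Fq α then h.choose else 0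

/-- Degree of an algebraic element. -/
def degAlg (α : L Fq) : ℕ := (minPolyPrim Fq α).natDegree

/-- Height of an algebraic element. -/
def heightAlg (α : L Fq) : ℝ := Hpoly Fq (minPolyPrim Fq α)

/-- Inseparable degree of a polynomial `P ∈ (F_q[T])[X]`: the largest power `f = p^j` of the
characteristic such that `P(X) = R(X^f)` for some `R`. -/
def insepDeg (P : Polynomial (Polynomial Fq)) : ℕ :=
  (ringChar Fq) ^ sSup {j : ℕ | ∃ R : Polynomial (Polynomial Fq),
    P = R.comp (Polynomial.X ^ (ringChar Fq) ^ j)}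

/-- Inseparable degree of an algebraic element. -/
def insepAlg (α : L Fq) : ℕ := insepDeg Fq (minPolyPrim Fq α)

/-- `α'` is the Galois conjugate of the quadratic element `α` (equal to `α` itself in the
inseparable case): the minimal polynomial of `α` factors as `A(X - α)(X - α')`. -/
def IsConjOf (α' α : L Fq) : Prop :=
  (minPolyPrim Fq α).natDegree = 2 ∧
  (minPolyPrim Fq α).map (φ Fq) =
    Polynomial.C (φ Fq (minPolyPrim Fq α).leadingCoeff) *
      (Polynomial.X - Polynomial.C α) * (Polynomial.X - Polynomial.C α')

/-- `v` is an absolute value on the algebraic closure of `F_q((T⁻¹))` extending `kabs`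
(such an extension exists and is unique). -/
structure IsAbsExt (v : L Fq → ℝ) : Prop where
  eq_zero_iff : ∀ x, v x = 0 ↔ x = 0
  map_mul : ∀ x y, v (x * y) = v x * v y
  add_le : ∀ x y, v (x + y) ≤ max (v x) (v y)
  nonneg : ∀ x, 0 ≤ v x
  extends_kabs : ∀ f : K Fq, v (toL Fq f) = kabs Fq f

/-- The exponent `w_n(ξ)`: the supremum of the real numbers `w` such that
`0 < |P(ξ)| ≤ H(P)^{-w}` for infinitely many `P ∈ (F_q[T])[X]` of degree at most `n`. -/
def wExp (n : ℕ) (ξ : K Fq) : EReal :=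
  sSup {x : EReal | ∃ w : ℝ, x = (w : EReal) ∧
    {P : Polynomial (Polynomial Fq) | P.natDegree ≤ n ∧ 0 < kabs Fq (evalK Fq P ξ) ∧
      kabs Fq (evalK Fq P ξ) ≤ Hpoly Fq P ^ (-w)}.Infinite}

/-- The exponent `w_n^*(ξ)`: the supremum of the real numbers `w` such that
`0 < |ξ - α| ≤ H(α)^{-w-1}` for infinitely many algebraic `α` of degree at most `n`. -/
def wStarExp (v : L Fq → ℝ) (n : ℕ) (ξ : K Fq) : EReal :=
  sSup {x : EReal | ∃ w : ℝ, x = (w : EReal) ∧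
    {α : L Fq | IsAlgElem Fq α ∧ degAlg Fq α ≤ n ∧ 0 < v (toL Fq ξ - α) ∧
      v (toL Fq ξ - α) ≤ heightAlg Fq α ^ (-w - 1)}.Infinite}

/-- `pSeq a n = p_{n-1}`, the numerators of the convergents of `[a 0; a 1, a 2, …]`
(with `p_{-1} = 1`). -/
def pSeq (a : ℕ → Polynomial Fq) : ℕ → Polynomial Fq
  | 0 => 1
  | 1 => a 0
  | (n+2) => a (n+1) * pSeq a (n+1) + pSeq a n

/-- `qSeq a n = q_{n-1}`, the denominators of the convergents of `[a 0; a 1, a 2, …]`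
(with `q_{-1} = 0`). -/
def qSeq (a : ℕ → Polynomial Fq) : ℕ → Polynomial Fq
  | 0 => 0
  | 1 => 1
  | (n+2) => a (n+1) * qSeq a (n+1) + qSeq a n

/-- `ξ` has continued fraction expansion `[a 0; a 1, a 2, …]`: each partial quotient `a n`
(`n ≥ 1`) has degree at least one and `|ξ - p_n/q_n| = |q_n|⁻¹|q_{n+1}|⁻¹` for all `n ≥ 0`. -/
def IsCFOf (ξ : K Fq) (a : ℕ → Polynomial Fq) : Prop :=
  (∀ n, 1 ≤ n → 1 ≤ (a n).natDegree) ∧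
  ∀ n : ℕ,
    kabs Fq (ξ - polyToK Fq (pSeq Fq a (n+1)) / polyToK Fq (qSeq Fq a (n+1))) =
      (kabs Fq (polyToK Fq (qSeq Fq a (n+1))) * kabs Fq (polyToK Fq (qSeq Fq a (n+2))))⁻¹

/-- The sequence of partial quotients of `[0; b 0, b 1, b 2, …]`. -/
def cfA (b : ℕ → Polynomial Fq) : ℕ → Polynomial Fq := fun n => if n = 0 then 0 else b (n - 1)

/-- `qden b n` is the denominator `q_n` of the `n`-th convergent of `[0; b 0, b 1, …]`. -/
def qden (b : ℕ → Polynomial Fq) (n : ℕ) : Polynomial Fq := qSeq Fq (cfA Fq b) (n + 1)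

/-- `V^w` for a finite word `V` and a real `w ≥ 0`: `⌊w⌋` copies of `V` followed by the prefix
of `V` of length `⌈(w - ⌊w⌋)|V|⌉`. -/
def wordPow {A : Type*} (V : List A) (w : ℝ) : List A :=
  (List.replicate ⌊w⌋₊ V).flatten ++ V.take ⌈(w - ⌊w⌋₊) * V.length⌉₊

/-- The finite word `l` is a prefix of the infinite word `b`. -/
def IsPrefixOfSeq {A : Type*} (l : List A) (b : ℕ → A) : Prop :=
  ∀ (i : ℕ) (h : i < l.length), l.get ⟨i, h⟩ = b i

/-- Condition `(*)_ρ` for an infinite word. -/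
def SatisfiesCond {A : Type*} (b : ℕ → A) (ρ : ℝ) : Prop :=
  ∃ (U V : ℕ → List A) (w : ℕ → ℝ),
    (∀ n, V n ≠ []) ∧ (∀ n, 0 ≤ w n) ∧
    (∀ n, IsPrefixOfSeq (U n ++ wordPow (V n) (w n)) b) ∧
    (∀ n, ρ * (((U n).length + (V n).length : ℕ) : ℝ) ≤
      (((U n).length + (wordPow (V n) (w n)).length : ℕ) : ℝ)) ∧
    StrictMono fun n => (wordPow (V n) (w n)).length

/-- The Diophantine exponent of an infinite word: the supremum of the `ρ` such that the word
satisfies Condition `(*)_ρ`. -/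
def dioExp {A : Type*} (b : ℕ → A) : EReal :=
  sSup {x : EReal | ∃ ρ : ℝ, x = (ρ : EReal) ∧ SatisfiesCond b ρ}

/-- The complexity function: the number of distinct blocks of `n` consecutive letters. -/
def complexity {A : Type*} (b : ℕ → A) (n : ℕ) : ℕ∞ :=
  {w : Fin n → A | ∃ i : ℕ, ∀ k : Fin n, w k = b (i + k)}.encard

/-- The infinite word `b` is ultimately periodic. -/
def UltimatelyPeriodic {A : Type*} (b : ℕ → A) : Prop :=
  ∃ N T : ℕ, 0 < T ∧ ∀ n, N ≤ n → b (n + T) = b n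

section Aux

variable {Fq}

set_option linter.unusedSectionVars false
set_option linter.unusedSimpArgs false

variable (Fq) in
/-- The cardinality of the residue field as a real number. -/
def qq : ℝ := (Fintype.card Fq : ℝ)

variable (Fq) in
lemma one_lt_qq : 1 < qq Fq := by
  unfold qq
  exact_mod_cast Fintype.one_lt_card

variable (Fq) in
lemma qq_pos : 0 < qq Fq := lt_trans one_pos (one_lt_qq Fq)

lemma kabs_zero : kabs Fq 0 = 0 := by simp [kabs]

lemma kabs_of_ne {f : K Fq} (h : f ≠ 0) : kabs Fq f = qq Fq ^ (-f.order) := by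
  simp [kabs, h, qq]

lemma kabs_nonneg (f : K Fq) : 0 ≤ kabs Fq f := by
  by_cases h : f = 0
  · simp [h, kabs_zero]
  · rw [kabs_of_ne h]
    exact (zpow_pos (qq_pos Fq) _).le

lemma kabs_pos {f : K Fq} (h : f ≠ 0) : 0 < kabs Fq f := by
  rw [kabs_of_ne h]
  exact zpow_pos (qq_pos Fq) _

lemma kabs_eq_zero {f : K Fq} : kabs Fq f = 0 ↔ f = 0 :=
  ⟨fun h => by_contra fun h' => (kabs_pos h').ne' h, fun h => by rw [h, kabs_zero]⟩

lemma kabs_mul (f g : K Fq) : kabs Fq (f * g) = kabs Fq f * kabs Fq g := by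
  by_cases hf : f = 0
  · simp [hf, kabs_zero]
  by_cases hg : g = 0
  · simp [hg, kabs_zero]
  rw [kabs_of_ne hf, kabs_of_ne hg, kabs_of_ne (mul_ne_zero hf hg), HahnSeries.order_mul hf hg,
    ← zpow_add₀ (qq_pos Fq).ne']
  congr 1
  ring

lemma kabs_one : kabs Fq 1 = 1 := by
  rw [kabs_of_ne one_ne_zero]
  simp

lemma kabs_neg (f : K Fq) : kabs Fq (-f) = kabs Fq f := by
  have h : kabs Fq (-1) = 1 := by
    have h1 : kabs Fq (-1) * kabs Fq (-1) = 1 := by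
      rw [← kabs_mul]
      simp [kabs_one]
    have := kabs_nonneg (-1 : K Fq)
    nlinarith
  rw [neg_eq_neg_one_mul, kabs_mul, h, one_mul]

lemma kabs_add_le (f g : K Fq) : kabs Fq (f + g) ≤ max (kabs Fq f) (kabs Fq g) := by
  by_cases hf : f = 0
  · simp [hf]
  by_cases hg : g = 0
  · simp [hg]
  by_cases hfg : f + g = 0
  · rw [hfg, kabs_zero]
    exact le_max_of_le_left (kabs_nonneg _)
  rw [kabs_of_ne hf, kabs_of_ne hg, kabs_of_ne hfg]
  have h := HahnSeries.min_order_le_order_add hfg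
  rcases min_le_iff.mp h with h | h
  · exact le_max_of_le_left (zpow_le_zpow_right₀ (one_lt_qq Fq).le (by omega))
  · exact le_max_of_le_right (zpow_le_zpow_right₀ (one_lt_qq Fq).le (by omega))

lemma kabs_sub_le (f g : K Fq) : kabs Fq (f - g) ≤ max (kabs Fq f) (kabs Fq g) := by
  rw [sub_eq_add_neg]
  simpa [kabs_neg] using kabs_add_le f (-g)

lemma kabs_add_le' {f g : K Fq} {c : ℝ} (hf : kabs Fq f ≤ c) (hg : kabs Fq g ≤ c) :
    kabs Fq (f + g) ≤ c := (kabs_add_le f g).trans (max_le hf hg)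

lemma kabs_sub_le' {f g : K Fq} {c : ℝ} (hf : kabs Fq f ≤ c) (hg : kabs Fq g ≤ c) :
    kabs Fq (f - g) ≤ c := (kabs_sub_le f g).trans (max_le hf hg)

lemma kabs_add_lt' {f g : K Fq} {c : ℝ} (hf : kabs Fq f < c) (hg : kabs Fq g < c) :
    kabs Fq (f + g) < c := (kabs_add_le f g).trans_lt (max_lt hf hg)

lemma kabs_sub_lt' {f g : K Fq} {c : ℝ} (hf : kabs Fq f < c) (hg : kabs Fq g < c) :
    kabs Fq (f - g) < c := (kabs_sub_le f g).trans_lt (max_lt hf hg)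

lemma kabs_add_eq {f g : K Fq} (h : kabs Fq g < kabs Fq f) : kabs Fq (f + g) = kabs Fq f := by
  apply le_antisymm
  · exact kabs_add_le' le_rfl h.le
  · by_contra! h'
    have : kabs Fq ((f + g) - g) < kabs Fq f := kabs_sub_lt' h' h
    simp at this

lemma kabs_sub_eq {f g : K Fq} (h : kabs Fq g < kabs Fq f) : kabs Fq (f - g) = kabs Fq f := by
  rw [sub_eq_add_neg]
  exact kabs_add_eq (by rwa [kabs_neg])

lemma kabs_pow (f : K Fq) (n : ℕ) : kabs Fq (f ^ n) = kabs Fq f ^ n := by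
  induction n with
  | zero => simp [kabs_one]
  | succ n ih => rw [pow_succ, pow_succ, kabs_mul, ih]

lemma kabs_div (f g : K Fq) : kabs Fq (f / g) = kabs Fq f / kabs Fq g := by
  by_cases hg : g = 0
  · simp [hg, kabs_zero]
  rw [eq_div_iff (kabs_eq_zero.not.mpr hg), ← kabs_mul, div_mul_cancel₀ _ hg]

lemma kabs_TT : kabs Fq (TT Fq) = qq Fq := by
  unfold TT
  rw [kabs_of_ne (HahnSeries.single_ne_zero one_ne_zero), HahnSeries.order_single one_ne_zero]
  simp

lemma kabs_C {c : Fq} (hc : c ≠ 0) : kabs Fq (HahnSeries.C c) = 1 := by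
  rw [kabs_of_ne (by simpa using hc), HahnSeries.order_C]
  simp

lemma polyToK_C (c : Fq) : polyToK Fq (C c) = HahnSeries.C c := by
  simp [polyToK]

lemma polyToK_X : polyToK Fq X = TT Fq := by
  simp [polyToK]

lemma pabs_aux (n : ℕ) : ∀ p : Polynomial Fq, p.natDegree = n → p ≠ 0 →
    kabs Fq (polyToK Fq p) = qq Fq ^ n := by
  induction n using Nat.strong_induction_on with
  | _ n ih =>
    intro p hp h0
    have hlead : kabs Fq (polyToK Fq (C p.leadingCoeff * X ^ p.natDegree)) = qq Fq ^ n := by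
      rw [map_mul, map_pow, polyToK_C, polyToK_X, kabs_mul, kabs_pow, kabs_TT,
        kabs_C (leadingCoeff_ne_zero.mpr h0), one_mul, hp]
    rw [← eraseLead_add_C_mul_X_pow p, map_add, add_comm, ← hlead]
    apply kabs_add_eq
    by_cases he : p.eraseLead = 0
    · rw [he, map_zero, kabs_zero, hlead]
      exact pow_pos (qq_pos Fq) _
    · have hlt : p.eraseLead.natDegree < n := by
        rcases eraseLead_natDegree_lt_or_eraseLead_eq_zero p with h | h
        · rwa [← hp]
        · exact absurd h he
      rw [hlead, ih _ hlt _ rfl he]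
      exact pow_lt_pow_right₀ (one_lt_qq Fq) hlt

lemma pabs_of_ne {p : Polynomial Fq} (h : p ≠ 0) :
    kabs Fq (polyToK Fq p) = qq Fq ^ p.natDegree := pabs_aux _ p rfl h

lemma one_le_pabs {p : Polynomial Fq} (h : p ≠ 0) : 1 ≤ kabs Fq (polyToK Fq p) := by
  rw [pabs_of_ne h]
  exact one_le_pow₀ (one_lt_qq Fq).le

lemma eq_zero_of_pabs_lt {p : Polynomial Fq} (h : kabs Fq (polyToK Fq p) < 1) : p = 0 := by
  by_contra h0
  exact absurd (one_le_pabs h0) (not_le.mpr h)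

lemma polyToK_inj : Function.Injective (polyToK Fq) := by
  rw [injective_iff_map_eq_zero]
  intro p hp
  exact eq_zero_of_pabs_lt (by rw [hp, kabs_zero]; exact one_pos)

lemma polyToK_ne_zero {p : Polynomial Fq} (h : p ≠ 0) : polyToK Fq p ≠ 0 := by
  rwa [Ne, map_eq_zero_iff _ polyToK_inj]

lemma natDegree_le_of_pabs_le {p : Polynomial Fq} {n : ℕ}
    (h : kabs Fq (polyToK Fq p) ≤ qq Fq ^ n) : p.natDegree ≤ n := by
  by_cases h0 : p = 0
  · simp [h0]
  rw [pabs_of_ne h0] at h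
  exact (pow_le_pow_iff_right₀ (one_lt_qq Fq)).mp h

lemma pabs_le_of_natDegree_le {p : Polynomial Fq} {n : ℕ}
    (h : p.natDegree ≤ n) : kabs Fq (polyToK Fq p) ≤ qq Fq ^ n := by
  by_cases h0 : p = 0
  · rw [h0, map_zero, kabs_zero]
    exact (pow_pos (qq_pos Fq) _).le
  rw [pabs_of_ne h0]
  exact pow_le_pow_right₀ (one_lt_qq Fq).le h

lemma kabs_le_of_coeff {f : K Fq} {n : ℤ} (h : ∀ j < n, f.coeff j = 0) :
    kabs Fq f ≤ qq Fq ^ (-n) := by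
  by_cases h0 : f = 0
  · rw [h0, kabs_zero]
    exact (zpow_pos (qq_pos Fq) _).le
  rw [kabs_of_ne h0]
  have := (HahnSeries.le_order_iff_forall h0).mpr h
  exact zpow_le_zpow_right₀ (one_lt_qq Fq).le (by omega)

lemma coeff_eq_zero_of_kabs {f : K Fq} {n : ℤ} (h : kabs Fq f ≤ qq Fq ^ (-n)) {j : ℤ}
    (hj : j < n) : f.coeff j = 0 := by
  by_cases h0 : f = 0
  · simp [h0]
  rw [kabs_of_ne h0] at h
  have := (zpow_le_zpow_iff_right₀ (one_lt_qq Fq)).mp h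
  exact HahnSeries.coeff_eq_zero_of_lt_order (by omega)

variable (Fq) in
/-- The absolute value on `F_q[T]`. -/
def pabv : AbsoluteValue (Polynomial Fq) ℝ where
  toFun p := kabs Fq (polyToK Fq p)
  map_mul' p r := by rw [map_mul, kabs_mul]
  nonneg' p := kabs_nonneg _
  eq_zero' p := by rw [kabs_eq_zero, map_eq_zero_iff _ polyToK_inj]
  add_le' p r := by
    rw [map_add]
    refine (kabs_add_le _ _).trans (max_le ?_ ?_)
    · linarith [kabs_nonneg (polyToK Fq r)]
    · linarith [kabs_nonneg (polyToK Fq p)]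

lemma pabv_apply (p : Polynomial Fq) : pabv Fq p = kabs Fq (polyToK Fq p) := rfl

lemma Hpoly_eq_gauss (P : Polynomial (Polynomial Fq)) :
    Hpoly Fq P = P.gaussNorm (pabv Fq) 1 := by
  have hle : ∀ i, kabs Fq (polyToK Fq (P.coeff i)) ≤ P.gaussNorm (pabv Fq) 1 := by
    intro i
    have := P.le_gaussNorm (pabv Fq) (c := 1) zero_le_one i
    simpa [pabv_apply] using this
  apply le_antisymm
  · exact ciSup_le hle
  · obtain ⟨i, hi⟩ := P.exists_eq_gaussNorm (pabv Fq) 1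
    rw [hi, one_pow, mul_one]
    exact le_ciSup (f := fun i => kabs Fq (polyToK Fq (P.coeff i))) ⟨_, by rintro _ ⟨i, rfl⟩; exact hle i⟩ i

lemma le_Hpoly (P : Polynomial (Polynomial Fq)) (i : ℕ) :
    kabs Fq (polyToK Fq (P.coeff i)) ≤ Hpoly Fq P := by
  rw [Hpoly_eq_gauss]
  have := P.le_gaussNorm (pabv Fq) (c := 1) zero_le_one i
  simpa [pabv_apply] using this

lemma Hpoly_le {P : Polynomial (Polynomial Fq)} {c : ℝ}
    (h : ∀ i, kabs Fq (polyToK Fq (P.coeff i)) ≤ c) : Hpoly Fq P ≤ c := ciSup_le h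

lemma one_le_Hpoly {P : Polynomial (Polynomial Fq)} (h : P ≠ 0) : 1 ≤ Hpoly Fq P :=
  (one_le_pabs (leadingCoeff_ne_zero.mpr h)).trans (le_Hpoly P P.natDegree)

lemma Hpoly_mul (P R : Polynomial (Polynomial Fq)) :
    Hpoly Fq (P * R) = Hpoly Fq P * Hpoly Fq R := by
  simp only [Hpoly_eq_gauss]
  apply gaussNorm_mul _ one_pos
  intro p r
  show kabs Fq (polyToK Fq (p + r)) ≤ _
  rw [map_add]
  exact kabs_add_le _ _

lemma Hpoly_le_of_dvd {P R : Polynomial (Polynomial Fq)} (h : P ∣ R) (hR : R ≠ 0) :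
    Hpoly Fq P ≤ Hpoly Fq R := by
  obtain ⟨S, rfl⟩ := h
  rw [Hpoly_mul]
  have h1 := one_le_Hpoly (left_ne_zero_of_mul hR)
  have h2 := one_le_Hpoly (right_ne_zero_of_mul hR)
  nlinarith

lemma finite_bdd (h : ℕ) : {p : Polynomial Fq | p.natDegree ≤ h}.Finite := by
  have : Function.Injective (fun p : {p : Polynomial Fq | p.natDegree ≤ h} =>
      fun i : Fin (h + 1) => p.1.coeff i) := by
    intro p r hpr
    apply Subtype.ext
    ext n
    by_cases hn : n < h + 1
    · exact congrFun hpr ⟨n, hn⟩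
    · have hp : p.1.natDegree ≤ h := p.2
      have hr : r.1.natDegree ≤ h := r.2
      rw [coeff_eq_zero_of_natDegree_lt (by omega), coeff_eq_zero_of_natDegree_lt (by omega)]
  have := Finite.of_injective _ this
  exact Set.toFinite _

/-- The polynomial `a X² + b X + c`. -/
def tri (a b c : Polynomial Fq) : Polynomial (Polynomial Fq) :=
  C a * X ^ 2 + C b * X + C c

lemma tri_coeff_two (a b c : Polynomial Fq) : (tri a b c).coeff 2 = a := by
  simp [tri, coeff_X, coeff_C]

lemma tri_coeff_one (a b c : Polynomial Fq) : (tri a b c).coeff 1 = b := by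
  simp [tri, coeff_X, coeff_C, coeff_X_pow]

lemma tri_coeff_zero (a b c : Polynomial Fq) : (tri a b c).coeff 0 = c := by
  simp [tri]

lemma tri_natDegree (a b c : Polynomial Fq) : (tri a b c).natDegree ≤ 2 :=
  natDegree_quadratic_le

lemma eq_tri {P : Polynomial (Polynomial Fq)} (h : P.natDegree ≤ 2) :
    P = tri (P.coeff 2) (P.coeff 1) (P.coeff 0) := by
  ext1 n
  by_cases hn : n ≤ 2
  · interval_cases n
    · rw [tri_coeff_zero]
    · rw [tri_coeff_one]
    · rw [tri_coeff_two]
  · rw [coeff_eq_zero_of_natDegree_lt (by omega),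
      coeff_eq_zero_of_natDegree_lt (by have := tri_natDegree (P.coeff 2) (P.coeff 1) (P.coeff 0); omega)]

lemma Hpoly_tri_le {a b c : Polynomial Fq} {h : ℝ}
    (ha : kabs Fq (polyToK Fq a) ≤ h) (hb : kabs Fq (polyToK Fq b) ≤ h)
    (hc : kabs Fq (polyToK Fq c) ≤ h) : Hpoly Fq (tri a b c) ≤ h := by
  apply Hpoly_le
  intro n
  by_cases hn : n ≤ 2
  · interval_cases n
    · rwa [tri_coeff_zero]
    · rwa [tri_coeff_one]
    · rwa [tri_coeff_two]
  · rw [coeff_eq_zero_of_natDegree_lt (by have := tri_natDegree a b c; omega), map_zero, kabs_zero]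
    exact (kabs_nonneg _).trans ha

/-- `P(ξ)` for `P = a X² + b X + c`. -/
def LL (ξ : K Fq) (a b c : Polynomial Fq) : K Fq :=
  polyToK Fq a * ξ ^ 2 + polyToK Fq b * ξ + polyToK Fq c

/-- `P'(ξ)` for `P = a X² + b X + c`. -/
def MM (ξ : K Fq) (a b : Polynomial Fq) : K Fq :=
  2 * polyToK Fq a * ξ + polyToK Fq b

lemma evalK_tri (ξ : K Fq) (a b c : Polynomial Fq) : evalK Fq (tri a b c) ξ = LL ξ a b c := by
  simp [evalK, tri, LL, eval₂_add, eval₂_mul, eval₂_pow]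

lemma evalL_tri (α : L Fq) (a b c : Polynomial Fq) : evalL Fq (tri a b c) α =
    φ Fq a * α ^ 2 + φ Fq b * α + φ Fq c := by
  simp [evalL, tri, eval₂_add, eval₂_mul, eval₂_pow]

lemma toL_inj : Function.Injective (toL Fq) := (algebraMap (K Fq) (L Fq)).injective

lemma φ_inj : Function.Injective (φ Fq) := toL_inj.comp polyToK_inj

lemma toL_polyToK (a : Polynomial Fq) : toL Fq (polyToK Fq a) = φ Fq a := rfl

lemma kabs_two_le : kabs Fq 2 ≤ 1 := by
  rw [← one_add_one_eq_two]
  exact kabs_add_le' kabs_one.le kabs_one.le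

lemma kabs_mul_le {f g : K Fq} {h : ℝ} (hf : kabs Fq f ≤ 1) (hg : kabs Fq g ≤ h) :
    kabs Fq (f * g) ≤ h := by
  rw [kabs_mul]
  calc _ ≤ 1 * kabs Fq g := by gcongr; exact kabs_nonneg _
    _ ≤ h := by rwa [one_mul]

/-- The height is controlled by `P(ξ)`, `P'(ξ)` and the leading coefficient. -/
lemma coeffs_le {ξ : K Fq} (hξ : kabs Fq ξ ≤ 1) {a b c : Polynomial Fq} {h : ℝ}
    (hL : kabs Fq (LL ξ a b c) ≤ h) (hM : kabs Fq (MM ξ a b) ≤ h)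
    (ha : kabs Fq (polyToK Fq a) ≤ h) :
    kabs Fq (polyToK Fq b) ≤ h ∧ kabs Fq (polyToK Fq c) ≤ h := by
  have h2 : kabs Fq (2 * ξ) ≤ 1 := kabs_mul_le kabs_two_le hξ
  have hb : kabs Fq (polyToK Fq b) ≤ h := by
    have e : polyToK Fq b = MM ξ a b - (2 * ξ) * polyToK Fq a := by unfold MM; ring
    rw [e]
    exact kabs_sub_le' hM (kabs_mul_le h2 ha)
  refine ⟨hb, ?_⟩
  have e : polyToK Fq c = LL ξ a b c - ξ * polyToK Fq b - ξ * (ξ * polyToK Fq a) := by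
    unfold LL; ring
  rw [e]
  exact kabs_sub_le' (kabs_sub_le' hL (kabs_mul_le hξ hb)) (kabs_mul_le hξ (kabs_mul_le hξ ha))

lemma forms_le {ξ : K Fq} (hξ : kabs Fq ξ ≤ 1) {a b c : Polynomial Fq} {h : ℝ}
    (ha : kabs Fq (polyToK Fq a) ≤ h) (hb : kabs Fq (polyToK Fq b) ≤ h)
    (hc : kabs Fq (polyToK Fq c) ≤ h) :
    kabs Fq (LL ξ a b c) ≤ h ∧ kabs Fq (MM ξ a b) ≤ h := by
  have h2 : kabs Fq (2 * ξ) ≤ 1 := kabs_mul_le kabs_two_le hξ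
  constructor
  · have e : LL ξ a b c = ξ * (ξ * polyToK Fq a) + ξ * polyToK Fq b + polyToK Fq c := by
      unfold LL; ring
    rw [e]
    exact kabs_add_le' (kabs_add_le' (kabs_mul_le hξ (kabs_mul_le hξ ha)) (kabs_mul_le hξ hb)) hc
  · have e : MM ξ a b = (2 * ξ) * polyToK Fq a + polyToK Fq b := by unfold MM; ring
    rw [e]
    exact kabs_add_le' (kabs_mul_le h2 ha) hb

/-- Existence of a minimal polynomial for a root of a nonzero polynomial. -/
lemma isAlgElem_of_root {P : Polynomial (Polynomial Fq)} (hP : P ≠ 0) {α : L Fq}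
    (hα : evalL Fq P α = 0) : IsAlgElem Fq α := by
  have hex : ∃ R : Polynomial (Polynomial Fq), Irreducible R ∧ evalL Fq R α = 0 := by
    induction P using UniqueFactorizationMonoid.induction_on_prime with
    | h₁ => exact absurd rfl hP
    | h₂ u hu =>
      exfalso
      obtain ⟨w, hw⟩ := hu.exists_right_inv
      have : evalL Fq (u * w) α = 0 := by
        unfold evalL at *
        rw [eval₂_mul, hα, zero_mul]
      rw [hw] at this
      simp [evalL] at this
    | h₃ a p ha hp ih =>
      unfold evalL at hα
      rw [eval₂_mul] at hα
      rcases mul_eq_zero.mp hα with h | h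
      · exact ⟨p, hp.irreducible, h⟩
      · exact ih ha h
  obtain ⟨R, hR, hRα⟩ := hex
  have hR0 := hR.ne_zero
  have hdeg : 0 < R.natDegree := by
    by_contra h
    have h0 : R.natDegree = 0 := by omega
    rw [eq_C_of_natDegree_eq_zero h0] at hRα
    unfold evalL at hRα
    rw [eval₂_C, map_eq_zero_iff _ φ_inj] at hRα
    apply hR0
    rw [eq_C_of_natDegree_eq_zero h0, hRα, C_0]
  set l : Fq := R.leadingCoeff.leadingCoeff with hl
  have hl0 : l ≠ 0 := leadingCoeff_ne_zero.mpr (leadingCoeff_ne_zero.mpr hR0)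
  have hCu : IsUnit (C l⁻¹ : Polynomial Fq) := isUnit_C.mpr (isUnit_iff_ne_zero.mpr (inv_ne_zero hl0))
  have hu : IsUnit (C (C l⁻¹) : Polynomial (Polynomial Fq)) := isUnit_C.mpr hCu
  have hirr : Irreducible (C (C l⁻¹) * R) := (irreducible_isUnit_mul hu).mpr hR
  have hnd : (C (C l⁻¹) * R).natDegree = R.natDegree :=
    natDegree_C_mul (by simpa using hl0)
  refine ⟨C (C l⁻¹) * R, by rwa [hnd], hirr, hirr.isPrimitive (by rw [hnd]; exact hdeg.ne'), ?_, ?_⟩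
  · rw [leadingCoeff_mul, leadingCoeff_C, Monic, leadingCoeff_mul, leadingCoeff_C]
    exact inv_mul_cancel₀ hl0
  · unfold evalL at *
    rw [eval₂_mul, hRα, mul_zero]

lemma minPoly_dvd {Q P : Polynomial (Polynomial Fq)} {α : L Fq} (hQ : IsMinPolyOf Fq Q α)
    (hα : evalL Fq P α = 0) : Q ∣ P := by
  obtain ⟨h1, h2, h3, h4, h5⟩ := hQ
  let F := FractionRing (Polynomial Fq)
  apply h3.dvd_of_fraction_map_dvd_fraction_map (K := F)
  by_contra hnd
  have hirr : Irreducible (Q.map (algebraMap (Polynomial Fq) F)) :=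
    h3.irreducible_iff_irreducible_map_fraction_map.mp h2
  obtain ⟨u, w, huw⟩ := hirr.coprime_iff_not_dvd.mpr hnd
  let ψ : F →+* L Fq := IsFractionRing.lift (A := Polynomial Fq) (K := F) (g := φ Fq) φ_inj
  have hψ : ψ.comp (algebraMap (Polynomial Fq) F) = φ Fq :=
    RingHom.ext fun x => by simp [ψ]
  have key : ∀ R : Polynomial (Polynomial Fq),
      eval₂ ψ α (R.map (algebraMap (Polynomial Fq) F)) = evalL Fq R α := by
    intro R
    rw [eval₂_map, hψ]; rfl
  have := congrArg (eval₂ ψ α) huw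
  rw [eval₂_add, eval₂_mul, eval₂_mul, key, key, hα, h5, eval₂_one] at this
  simp at this

lemma minPolyPrim_spec {α : L Fq} (h : IsAlgElem Fq α) : IsMinPolyOf Fq (minPolyPrim Fq α) α := by
  unfold minPolyPrim
  rw [dif_pos h]
  exact h.choose_spec

lemma alg_of_root {P : Polynomial (Polynomial Fq)} (hP : P ≠ 0) (hdeg : P.natDegree ≤ 2) {α : L Fq}
    (hα : evalL Fq P α = 0) :
    IsAlgElem Fq α ∧ degAlg Fq α ≤ 2 ∧ heightAlg Fq α ≤ Hpoly Fq P := by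
  have h := isAlgElem_of_root hP hα
  have hd := minPoly_dvd (minPolyPrim_spec h) hα
  exact ⟨h, (natDegree_le_of_dvd hd hP).trans hdeg, Hpoly_le_of_dvd hd hP⟩

lemma one_le_heightAlg {α : L Fq} (h : IsAlgElem Fq α) : 1 ≤ heightAlg Fq α :=
  one_le_Hpoly (minPolyPrim_spec h).2.1.ne_zero

lemma v_neg {v : L Fq → ℝ} (hv : IsAbsExt Fq v) (x : L Fq) : v (-x) = v x := by
  have h1 : v (-1) = 1 := by
    have := hv.extends_kabs (-1)
    rw [kabs_neg, kabs_one] at this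
    rw [← this]
    congr 1
    simp
  rw [neg_eq_neg_one_mul, hv.map_mul, h1, one_mul]

/-- Lemma B: a root close to `ξ`. -/
lemma exists_root {v : L Fq → ℝ} (hv : IsAbsExt Fq v) {ξ : K Fq} {a b c : Polynomial Fq}
    (hL : LL ξ a b c ≠ 0) (hM : MM ξ a b ≠ 0) :
    ∃ α : L Fq, IsAlgElem Fq α ∧ degAlg Fq α ≤ 2 ∧ heightAlg Fq α ≤ Hpoly Fq (tri a b c) ∧
      0 < v (toL Fq ξ - α) ∧ v (toL Fq ξ - α) ≤ kabs Fq (LL ξ a b c) / kabs Fq (MM ξ a b) := by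
  have hP : tri a b c ≠ 0 := by
    intro h
    apply hL
    rw [← evalK_tri, h]
    simp [evalK]
  have hMpos := kabs_pos hM
  have eL : toL Fq (LL ξ a b c) = φ Fq a * (toL Fq ξ) ^ 2 + φ Fq b * toL Fq ξ + φ Fq c := by
    simp [LL, toL_polyToK]
  have eM : toL Fq (MM ξ a b) = 2 * φ Fq a * (toL Fq ξ) + φ Fq b := by
    have h2 : toL Fq 2 = 2 := map_ofNat _ 2
    simp [MM, toL_polyToK, h2]
  have hL' : toL Fq (LL ξ a b c) ≠ 0 := by rwa [Ne, map_eq_zero_iff _ toL_inj]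
  have key : ∃ α : L Fq, evalL Fq (tri a b c) α = 0 ∧
      v (toL Fq ξ - α) * kabs Fq (MM ξ a b) ≤ kabs Fq (LL ξ a b c) := by
    by_cases ha : a = 0
    · subst ha
      have hb : φ Fq b ≠ 0 := by
        intro h
        apply hM
        rw [← map_eq_zero_iff _ toL_inj, eM, h]
        simp
      refine ⟨-φ Fq c / φ Fq b, ?_, ?_⟩
      · rw [evalL_tri]
        field_simp
        simp
      · rw [← hv.extends_kabs, ← hv.extends_kabs, ← hv.map_mul, eL, eM]
        apply le_of_eq
        congr 1
        field_simp
        simp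
        ring
    · have ha' : φ Fq a ≠ 0 := by rwa [Ne, map_eq_zero_iff _ φ_inj]
      have hroot : ∃ α : L Fq, evalL Fq (tri a b c) α = 0 := by
        have hdeg : ((tri a b c).map (φ Fq)).degree ≠ 0 := by
          intro h
          have h2 : ((tri a b c).map (φ Fq)).coeff 2 = 0 := by
            apply coeff_eq_zero_of_degree_lt
            rw [h]
            norm_num
          rw [coeff_map, tri_coeff_two] at h2
          exact ha' h2
        obtain ⟨α, hα⟩ := IsAlgClosed.exists_root _ hdeg
        refine ⟨α, ?_⟩
        rwa [IsRoot, eval_map] at hα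
      obtain ⟨α, hα⟩ := hroot
      have hα' := hα
      rw [evalL_tri] at hα'
      obtain ⟨β, hβ⟩ : ∃ β, φ Fq b = - φ Fq a * (α + β) := by
        refine ⟨-φ Fq b / φ Fq a - α, ?_⟩
        field_simp
        ring
      have hc : φ Fq c = φ Fq a * α * β := by
        rw [hβ] at hα'
        linear_combination hα'
      have hβr : evalL Fq (tri a b c) β = 0 := by
        rw [evalL_tri, hβ, hc]
        ring
      have fL : toL Fq (LL ξ a b c) = φ Fq a * (toL Fq ξ - α) * (toL Fq ξ - β) := by
        rw [eL, hβ, hc]; ring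
      have fM : toL Fq (MM ξ a b) = φ Fq a * ((toL Fq ξ - α) + (toL Fq ξ - β)) := by
        rw [eM, hβ]; ring
      have n1 := hv.nonneg (toL Fq ξ - α)
      have n2 := hv.nonneg (toL Fq ξ - β)
      have n3 := hv.nonneg (φ Fq a)
      have hadd := hv.add_le (toL Fq ξ - α) (toL Fq ξ - β)
      rcases le_total (v (toL Fq ξ - α)) (v (toL Fq ξ - β)) with h | h
      · refine ⟨α, hα, ?_⟩
        rw [← hv.extends_kabs, ← hv.extends_kabs, fL, fM, hv.map_mul, hv.map_mul, hv.map_mul]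
        rw [max_eq_right h] at hadd
        calc _ ≤ v (toL Fq ξ - α) * (v (φ Fq a) * v (toL Fq ξ - β)) := by gcongr
          _ = _ := by ring
      · refine ⟨β, hβr, ?_⟩
        rw [← hv.extends_kabs, ← hv.extends_kabs, fL, fM, hv.map_mul, hv.map_mul, hv.map_mul]
        rw [max_eq_left h] at hadd
        calc _ ≤ v (toL Fq ξ - β) * (v (φ Fq a) * v (toL Fq ξ - α)) := by gcongr
          _ = _ := by ring
  obtain ⟨α, hα, hle⟩ := key
  obtain ⟨h1, h2, h3⟩ := alg_of_root hP (tri_natDegree a b c) hα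
  refine ⟨α, h1, h2, h3, ?_, ?_⟩
  · refine lt_of_le_of_ne (hv.nonneg _) (Ne.symm ?_)
    rw [Ne, hv.eq_zero_iff, sub_eq_zero]
    intro h
    apply hL'
    rw [eL, h, ← evalL_tri, hα]
  · rwa [le_div_iff₀ hMpos]

/-- Lemma A: a criterion for a lower bound of `w_2^*`. -/
lemma le_wStar {v : L Fq → ℝ} {ξ : K Fq} {w : ℝ}
    (h : ∀ δ : ℝ, 0 < δ → ∃ α : L Fq, IsAlgElem Fq α ∧ degAlg Fq α ≤ 2 ∧
      0 < v (toL Fq ξ - α) ∧ v (toL Fq ξ - α) < δ ∧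
      v (toL Fq ξ - α) ≤ heightAlg Fq α ^ (-w - 1)) : (w : EReal) ≤ wStarExp Fq v 2 ξ := by
  apply le_sSup
  refine ⟨w, rfl, ?_⟩
  intro hfin
  set S := {α : L Fq | IsAlgElem Fq α ∧ degAlg Fq α ≤ 2 ∧ 0 < v (toL Fq ξ - α) ∧
      v (toL Fq ξ - α) ≤ heightAlg Fq α ^ (-w - 1)} with hS
  obtain ⟨α₁, a1, a2, a3, -, a5⟩ := h 1 one_pos
  obtain ⟨β, hβ, hmin⟩ := Set.exists_min_image S (fun α => v (toL Fq ξ - α)) hfin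
    ⟨α₁, a1, a2, a3, a5⟩
  obtain ⟨α, b1, b2, b3, b4, b5⟩ := h _ hβ.2.2.1
  exact absurd (hmin α ⟨b1, b2, b3, b5⟩) (not_le.mpr b4)

lemma le_wExp {ξ : K Fq} {w : ℝ}
    (h : ∀ δ : ℝ, 0 < δ → ∃ P : Polynomial (Polynomial Fq), P.natDegree ≤ 2 ∧
      0 < kabs Fq (evalK Fq P ξ) ∧ kabs Fq (evalK Fq P ξ) < δ ∧
      kabs Fq (evalK Fq P ξ) ≤ Hpoly Fq P ^ (-w)) : (w : EReal) ≤ wExp Fq 2 ξ := by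
  apply le_sSup
  refine ⟨w, rfl, ?_⟩
  intro hfin
  set S := {P : Polynomial (Polynomial Fq) | P.natDegree ≤ 2 ∧ 0 < kabs Fq (evalK Fq P ξ) ∧
      kabs Fq (evalK Fq P ξ) ≤ Hpoly Fq P ^ (-w)} with hS
  obtain ⟨α₁, a1, a2, -, a5⟩ := h 1 one_pos
  obtain ⟨β, hβ, hmin⟩ := Set.exists_min_image S (fun P => kabs Fq (evalK Fq P ξ)) hfin
    ⟨α₁, a1, a2, a5⟩
  obtain ⟨α, b1, b2, b3, b5⟩ := h _ hβ.2.1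
  exact absurd (hmin α ⟨b1, b2, b5⟩) (not_le.mpr b3)

/-- Denominators, with shifted index. -/
abbrev Qs (b : ℕ → Polynomial Fq) (n : ℕ) : Polynomial Fq := qSeq Fq (cfA Fq b) n

/-- Numerators, with shifted index. -/
abbrev Ps (b : ℕ → Polynomial Fq) (n : ℕ) : Polynomial Fq := pSeq Fq (cfA Fq b) n

lemma Qs_zero (b : ℕ → Polynomial Fq) : Qs b 0 = 0 := by simp [Qs, qSeq]
lemma Qs_one (b : ℕ → Polynomial Fq) : Qs b 1 = 1 := by simp [Qs, qSeq]
lemma Qs_add_two (b : ℕ → Polynomial Fq) (n : ℕ) : Qs b (n + 2) = b n * Qs b (n + 1) + Qs b n := by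
  simp [Qs, qSeq, cfA]
lemma Ps_zero (b : ℕ → Polynomial Fq) : Ps b 0 = 1 := by simp [Ps, pSeq]
lemma Ps_one (b : ℕ → Polynomial Fq) : Ps b 1 = 0 := by simp [Ps, pSeq, cfA]
lemma Ps_add_two (b : ℕ → Polynomial Fq) (n : ℕ) : Ps b (n + 2) = b n * Ps b (n + 1) + Ps b n := by
  simp [Ps, pSeq, cfA]

/-- The degree of `q_n`. -/
def gg (b : ℕ → Polynomial Fq) (n : ℕ) : ℕ := ∑ i ∈ Finset.range n, (b i).natDegree

lemma gg_zero (b : ℕ → Polynomial Fq) : gg b 0 = 0 := by simp [gg]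

lemma gg_succ (b : ℕ → Polynomial Fq) (n : ℕ) : gg b (n + 1) = gg b n + (b n).natDegree := by
  simp [gg, Finset.sum_range_succ]

lemma gg_mono (b : ℕ → Polynomial Fq) : Monotone (gg b) := by
  apply monotone_nat_of_le_succ
  intro n
  rw [gg_succ]
  omega

lemma gg_lt {b : ℕ → Polynomial Fq} (hdeg : ∀ n, 1 ≤ (b n).natDegree) : StrictMono (gg b) := by
  apply strictMono_nat_of_lt_succ
  intro n
  rw [gg_succ]
  have := hdeg n
  omega

lemma le_gg {b : ℕ → Polynomial Fq} (hdeg : ∀ n, 1 ≤ (b n).natDegree) (n : ℕ) : n ≤ gg b n :=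
  (gg_lt hdeg).le_apply

lemma Qs_abs_aux {b : ℕ → Polynomial Fq} (hdeg : ∀ n, 1 ≤ (b n).natDegree) (n : ℕ) :
    kabs Fq (polyToK Fq (Qs b (n + 1))) = qq Fq ^ gg b n ∧
    kabs Fq (polyToK Fq (Qs b n)) < qq Fq ^ gg b n := by
  induction n with
  | zero =>
    rw [Qs_zero, zero_add, Qs_one, map_zero, map_one, kabs_zero, kabs_one, gg_zero]
    simp
  | succ n ih =>
    have hb : b n ≠ 0 := by
      intro h
      have := hdeg n
      simp [h] at this
    have hlt : qq Fq ^ gg b n < qq Fq ^ gg b (n + 1) :=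
      pow_lt_pow_right₀ (one_lt_qq Fq) (gg_lt hdeg (Nat.lt_succ_self n))
    have h1 : kabs Fq (polyToK Fq (b n * Qs b (n + 1))) = qq Fq ^ gg b (n + 1) := by
      rw [map_mul, kabs_mul, ih.1, pabs_of_ne hb, gg_succ, pow_add, mul_comm]
    refine ⟨?_, ?_⟩
    · rw [Qs_add_two, map_add, ← h1]
      apply kabs_add_eq
      rw [h1]
      exact ih.2.trans hlt
    · rw [ih.1]
      exact hlt

lemma Qs_abs {b : ℕ → Polynomial Fq} (hdeg : ∀ n, 1 ≤ (b n).natDegree) (n : ℕ) :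
    kabs Fq (polyToK Fq (Qs b (n + 1))) = qq Fq ^ gg b n := (Qs_abs_aux hdeg n).1

lemma Qs_abs_lt {b : ℕ → Polynomial Fq} (hdeg : ∀ n, 1 ≤ (b n).natDegree) (n : ℕ) :
    kabs Fq (polyToK Fq (Qs b n)) < qq Fq ^ gg b n := (Qs_abs_aux hdeg n).2

/-- `q_n ξ - p_n`, with shifted index. -/
def DD (ξ : K Fq) (b : ℕ → Polynomial Fq) (n : ℕ) : K Fq :=
  polyToK Fq (Qs b n) * ξ - polyToK Fq (Ps b n)

lemma DD_add_two (ξ : K Fq) (b : ℕ → Polynomial Fq) (n : ℕ) :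
    DD ξ b (n + 2) = polyToK Fq (b n) * DD ξ b (n + 1) + DD ξ b n := by
  unfold DD
  rw [Qs_add_two, Ps_add_two]
  simp only [map_add, map_mul]
  ring

lemma DD_abs {b : ℕ → Polynomial Fq} (hdeg : ∀ n, 1 ≤ (b n).natDegree) {ξ : K Fq}
    (hξ : IsCFOf Fq ξ (cfA Fq b)) (n : ℕ) : kabs Fq (DD ξ b n) = (qq Fq ^ gg b n)⁻¹ := by
  cases n with
  | zero => simp [DD, Qs_zero, Ps_zero, kabs_neg, kabs_one, gg_zero]
  | succ n =>
    have h := hξ.2 n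
    have hQ := Qs_abs hdeg n
    have hQ' := Qs_abs hdeg (n + 1)
    have hpos : 0 < qq Fq ^ gg b n := pow_pos (qq_pos Fq) _
    have hne : polyToK Fq (Qs b (n + 1)) ≠ 0 := by
      rw [Ne, ← kabs_eq_zero, hQ]
      exact hpos.ne'
    have e : DD ξ b (n + 1) = polyToK Fq (Qs b (n + 1)) *
        (ξ - polyToK Fq (Ps b (n + 1)) / polyToK Fq (Qs b (n + 1))) := by
      unfold DD
      field_simp
    rw [e, kabs_mul, h, hQ, hQ', mul_inv, mul_inv_cancel_left₀ hpos.ne']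

lemma DD_one (ξ : K Fq) (b : ℕ → Polynomial Fq) : DD ξ b 1 = ξ := by
  simp [DD, Qs_one, Ps_one]

lemma xi_abs {b : ℕ → Polynomial Fq} (hdeg : ∀ n, 1 ≤ (b n).natDegree) {ξ : K Fq}
    (hξ : IsCFOf Fq ξ (cfA Fq b)) : kabs Fq ξ ≤ 1 := by
  rw [← DD_one ξ b, DD_abs hdeg hξ]
  exact inv_le_one_of_one_le₀ (one_le_pow₀ (one_lt_qq Fq).le)

lemma DD_ne {b : ℕ → Polynomial Fq} (hdeg : ∀ n, 1 ≤ (b n).natDegree) {ξ : K Fq}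
    (hξ : IsCFOf Fq ξ (cfA Fq b)) (n : ℕ) : DD ξ b n ≠ 0 := by
  rw [Ne, ← kabs_eq_zero, DD_abs hdeg hξ]
  exact inv_ne_zero (pow_pos (qq_pos Fq) _).ne'

lemma DD_lt {b : ℕ → Polynomial Fq} (hdeg : ∀ n, 1 ≤ (b n).natDegree) {ξ : K Fq}
    (hξ : IsCFOf Fq ξ (cfA Fq b)) {m n : ℕ} (h : m < n) :
    kabs Fq (DD ξ b n) < kabs Fq (DD ξ b m) := by
  rw [DD_abs hdeg hξ, DD_abs hdeg hξ]
  exact inv_strictAnti₀ (pow_pos (qq_pos Fq) _) (pow_lt_pow_right₀ (one_lt_qq Fq) (gg_lt hdeg h))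

lemma DD_le_one {b : ℕ → Polynomial Fq} (hdeg : ∀ n, 1 ≤ (b n).natDegree) {ξ : K Fq}
    (hξ : IsCFOf Fq ξ (cfA Fq b)) (n : ℕ) : kabs Fq (DD ξ b n) ≤ 1 := by
  rw [DD_abs hdeg hξ]
  exact inv_le_one_of_one_le₀ (one_le_pow₀ (one_lt_qq Fq).le)

/-- If two complete quotients agree, the sequence is ultimately periodic. -/
lemma periodic_of_eq {b : ℕ → Polynomial Fq} (hdeg : ∀ n, 1 ≤ (b n).natDegree) {ξ : K Fq}
    (hξ : IsCFOf Fq ξ (cfA Fq b)) {i j : ℕ} (hij : i < j)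
    (h : DD ξ b i * DD ξ b (j + 1) = DD ξ b j * DD ξ b (i + 1)) : UltimatelyPeriodic b := by
  have step : ∀ i j : ℕ, DD ξ b i * DD ξ b (j + 1) = DD ξ b j * DD ξ b (i + 1) →
      b i = b j ∧ DD ξ b (i + 1) * DD ξ b (j + 2) = DD ξ b (j + 1) * DD ξ b (i + 2) := by
    intro i j h
    have e : polyToK Fq (b i - b j) * (DD ξ b (i + 1) * DD ξ b (j + 1)) =
        DD ξ b (i + 2) * DD ξ b (j + 1) - DD ξ b (j + 2) * DD ξ b (i + 1) := by
      rw [DD_add_two, DD_add_two, map_sub]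
      linear_combination -h
    have p1 := kabs_pos (DD_ne hdeg hξ (i + 1))
    have p2 := kabs_pos (DD_ne hdeg hξ (j + 1))
    have hlt : kabs Fq (polyToK Fq (b i - b j)) * (kabs Fq (DD ξ b (i + 1)) * kabs Fq (DD ξ b (j + 1))) <
        1 * (kabs Fq (DD ξ b (i + 1)) * kabs Fq (DD ξ b (j + 1))) := by
      rw [← kabs_mul, ← kabs_mul, e, one_mul]
      apply kabs_sub_lt'
      · rw [kabs_mul, kabs_mul]
        exact mul_lt_mul_of_pos_right (DD_lt hdeg hξ (Nat.lt_succ_self _)) p2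
      · rw [kabs_mul, kabs_mul, mul_comm]
        exact mul_lt_mul_of_pos_left (DD_lt hdeg hξ (Nat.lt_succ_self _)) p1
    have h1 := lt_of_mul_lt_mul_right hlt (by positivity)
    have h2 := eq_zero_of_pabs_lt h1
    have h3 := sub_eq_zero.mp h2
    refine ⟨h3, ?_⟩
    rw [h2, map_zero, zero_mul] at e
    linear_combination e
  have all : ∀ t : ℕ, DD ξ b (i + t) * DD ξ b (j + t + 1) = DD ξ b (j + t) * DD ξ b (i + t + 1) := by
    intro t
    induction t with
    | zero => exact h
    | succ t ih => exact (step _ _ ih).2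
  refine ⟨i, j - i, by omega, ?_⟩
  intro n hn
  have := (step _ _ (all (n - i))).1
  rw [show i + (n - i) = n by omega, show j + (n - i) = n + (j - i) by omega] at this
  exact this.symm

/-- Lagrange's theorem: `ξ` is not a root of a nonzero polynomial of degree at most two. -/
lemma LL_ne_zero {b : ℕ → Polynomial Fq} (hdeg : ∀ n, 1 ≤ (b n).natDegree)
    (hnup : ¬ UltimatelyPeriodic b) {ξ : K Fq} (hξ : IsCFOf Fq ξ (cfA Fq b))
    {A B E : Polynomial Fq} (hne : ¬ (A = 0 ∧ B = 0 ∧ E = 0)) : LL ξ A B E ≠ 0 := by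
  intro hL
  apply hnup
  set k := MM ξ A B with hk
  let fA : ℕ → Polynomial Fq := fun n => A * Ps b n ^ 2 + B * Ps b n * Qs b n + E * Qs b n ^ 2
  let fB : ℕ → Polynomial Fq := fun n => 2 * A * Ps b n * Ps b (n + 1)
    + B * (Ps b n * Qs b (n + 1) + Ps b (n + 1) * Qs b n) + 2 * E * Qs b n * Qs b (n + 1)
  have m2 : polyToK Fq 2 = 2 := map_ofNat _ 2
  have eA : ∀ n, polyToK Fq (fA n) =
      polyToK Fq A * DD ξ b n ^ 2 - k * (polyToK Fq (Qs b n) * DD ξ b n) := by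
    intro n
    simp only [fA, hk, map_add, map_mul, map_pow, DD, MM]
    unfold LL at hL
    linear_combination polyToK Fq (Qs b n) ^ 2 * hL
  have eB : ∀ n, polyToK Fq (fB n) =
      2 * (polyToK Fq A * (DD ξ b n * DD ξ b (n + 1))) - k * (polyToK Fq (Qs b n) * DD ξ b (n + 1) +
        polyToK Fq (Qs b (n + 1)) * DD ξ b n) := by
    intro n
    simp only [fB, hk, map_add, map_mul, DD, MM, m2]
    unfold LL at hL
    linear_combination 2 * polyToK Fq (Qs b n) * polyToK Fq (Qs b (n + 1)) * hL
  have eR : ∀ n, polyToK Fq (fA (n + 1)) * DD ξ b n ^ 2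
      - polyToK Fq (fB n) * (DD ξ b n * DD ξ b (n + 1)) + polyToK Fq (fA n) * DD ξ b (n + 1) ^ 2 = 0 := by
    intro n
    simp only [fA, fB, map_add, map_mul, map_pow, DD, m2]
    unfold LL at hL
    linear_combination (polyToK Fq (Ps b (n + 1)) * polyToK Fq (Qs b n) -
      polyToK Fq (Ps b n) * polyToK Fq (Qs b (n + 1))) ^ 2 * hL
  have hD1 := DD_le_one hdeg hξ
  have hQD : ∀ n, kabs Fq (polyToK Fq (Qs b n) * DD ξ b n) ≤ 1 := by
    intro n
    rw [kabs_mul, DD_abs hdeg hξ]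
    rw [← div_eq_mul_inv, div_le_one (pow_pos (qq_pos Fq) _)]
    exact (Qs_abs_lt hdeg n).le
  have hQD' : ∀ n, kabs Fq (polyToK Fq (Qs b n) * DD ξ b (n + 1)) ≤ 1 := by
    intro n
    refine le_trans ?_ (hQD n)
    rw [kabs_mul, kabs_mul]
    exact mul_le_mul_of_nonneg_left (DD_lt hdeg hξ (Nat.lt_succ_self n)).le (kabs_nonneg _)
  have hQD'' : ∀ n, kabs Fq (polyToK Fq (Qs b (n + 1)) * DD ξ b n) ≤ 1 := by
    intro n
    rw [kabs_mul, DD_abs hdeg hξ, Qs_abs hdeg]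
    exact (mul_inv_cancel₀ (pow_pos (qq_pos Fq) _).ne').le
  obtain ⟨h, hh⟩ : ∃ h : ℕ, max (kabs Fq (polyToK Fq A)) (kabs Fq k) ≤ qq Fq ^ h := by
    obtain ⟨h, hh⟩ := pow_unbounded_of_one_lt (max (kabs Fq (polyToK Fq A)) (kabs Fq k)) (one_lt_qq Fq)
    exact ⟨h, hh.le⟩
  have hAh := (le_max_left _ _).trans hh
  have hkh := (le_max_right _ _).trans hh
  have bA : ∀ n, (fA n).natDegree ≤ h := by
    intro n
    apply natDegree_le_of_pabs_le
    rw [eA, mul_comm, mul_comm k, pow_two]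
    exact kabs_sub_le' (kabs_mul_le (kabs_mul_le (hD1 n) (hD1 n)) hAh) (kabs_mul_le (hQD n) hkh)
  have bB : ∀ n, (-fB n).natDegree ≤ h := by
    intro n
    rw [natDegree_neg]
    apply natDegree_le_of_pabs_le
    rw [eB, mul_comm k, mul_comm (polyToK Fq A)]
    exact kabs_sub_le' (kabs_mul_le kabs_two_le (kabs_mul_le (kabs_mul_le (hD1 n) (hD1 _)) hAh))
      (kabs_mul_le (kabs_add_le' (hQD' n) (hQD'' n)) hkh)
  -- `fA n ≠ 0` for large `n`
  have hlarge : ∀ c : ℝ, ∃ n0 : ℕ, ∀ n, n0 ≤ n → c * kabs Fq (DD ξ b n) < 1 := by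
    intro c
    obtain ⟨n0, hn0⟩ := pow_unbounded_of_one_lt c (one_lt_qq Fq)
    refine ⟨n0, fun n hn => ?_⟩
    rw [DD_abs hdeg hξ, ← div_eq_mul_inv, div_lt_one (pow_pos (qq_pos Fq) _)]
    exact hn0.trans_le (pow_le_pow_right₀ (one_lt_qq Fq).le (hn.trans (le_gg hdeg n)))
  have hA0 : ∃ n0, ∀ n, n0 ≤ n → fA (n + 1) ≠ 0 := by
    by_cases hk0 : k = 0
    · exfalso
      obtain ⟨n0, hn0⟩ := hlarge (kabs Fq (polyToK Fq A))
      have e := eA n0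
      rw [hk0, zero_mul, sub_zero] at e
      have hz : fA n0 = 0 := by
        apply eq_zero_of_pabs_lt
        rw [e, kabs_mul, pow_two, kabs_mul]
        refine lt_of_le_of_lt ?_ (hn0 n0 le_rfl)
        have h1 := hD1 n0
        have h2 := kabs_nonneg (DD ξ b n0)
        have h3 := kabs_nonneg (polyToK Fq A)
        gcongr
        nlinarith
      rw [hz, map_zero] at e
      have hA : A = 0 := by
        rcases mul_eq_zero.mp e.symm with h | h
        · exact (map_eq_zero_iff _ polyToK_inj).mp h
        · exact absurd (pow_eq_zero_iff (two_ne_zero)|>.mp h) (DD_ne hdeg hξ n0)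
      have hB : B = 0 := by
        rw [hk] at hk0
        simp only [MM, hA, map_zero, mul_zero, zero_mul, zero_add] at hk0
        exact (map_eq_zero_iff _ polyToK_inj).mp hk0
      have hE : E = 0 := by
        simp only [LL, hA, hB, map_zero, mul_zero, zero_mul, zero_add] at hL
        exact (map_eq_zero_iff _ polyToK_inj).mp hL
      exact hne ⟨hA, hB, hE⟩
    · obtain ⟨n0, hn0⟩ := hlarge (kabs Fq (polyToK Fq A) / kabs Fq k)
      refine ⟨n0, fun n hn hz => ?_⟩
      have e := eA (n + 1)
      rw [hz, map_zero] at e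
      have hkpos := kabs_pos hk0
      have e2 : polyToK Fq A * DD ξ b (n + 1) = k * polyToK Fq (Qs b (n + 1)) := by
        apply mul_right_cancel₀ (DD_ne hdeg hξ (n + 1))
        linear_combination -e
      have e3 := congrArg (kabs Fq) e2
      rw [kabs_mul, kabs_mul, Qs_abs hdeg] at e3
      have h1 := hn0 (n + 1) (by omega)
      rw [div_mul_eq_mul_div, div_lt_one hkpos, e3] at h1
      have : (1 : ℝ) ≤ qq Fq ^ gg b n := one_le_pow₀ (one_lt_qq Fq).le
      nlinarith
  obtain ⟨n0, hn0⟩ := hA0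
  -- pigeonhole
  let S : Set (Polynomial Fq) := {p | p.natDegree ≤ h}
  have hS : S.Finite := finite_bdd h
  let T : Set (K Fq) := ⋃ t ∈ S ×ˢ S ×ˢ S,
    {x | x ∈ ((tri t.1 t.2.1 t.2.2).map (polyToK Fq)).roots}
  have hT : T.Finite := by
    apply Set.Finite.biUnion (hS.prod (hS.prod hS))
    intro t _
    exact Multiset.finite_toSet _
  have hmem : ∀ n, DD ξ b (n0 + n) / DD ξ b (n0 + n + 1) ∈ T := by
    intro n
    simp only [T, Set.mem_iUnion]
    refine ⟨(fA (n0 + n + 1), -fB (n0 + n), fA (n0 + n)), ⟨bA _, bB _, bA _⟩, ?_⟩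
    show _ ∈ Polynomial.roots _
    rw [mem_roots']
    constructor
    · intro h0
      have := congrArg (fun P => coeff P 2) h0
      simp only [coeff_map, tri_coeff_two, coeff_zero] at this
      exact hn0 _ (by omega) ((map_eq_zero_iff _ polyToK_inj).mp this)
    · rw [IsRoot, eval_map]
      have := evalK_tri (DD ξ b (n0 + n) / DD ξ b (n0 + n + 1)) (fA (n0 + n + 1)) (-fB (n0 + n)) (fA (n0 + n))
      unfold evalK at this
      rw [this]
      unfold LL
      have hd := DD_ne hdeg hξ (n0 + n + 1)
      have hr := eR (n0 + n)
      rw [map_neg]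
      field_simp
      linear_combination hr
  have hnotinj : ¬ Function.Injective (fun n => DD ξ b (n0 + n) / DD ξ b (n0 + n + 1)) := by
    intro hinj
    exact (Set.infinite_of_injective_forall_mem hinj hmem) hT
  unfold Function.Injective at hnotinj
  push Not at hnotinj
  obtain ⟨i, j, hij, hne'⟩ := hnotinj
  have hd1 := DD_ne hdeg hξ (n0 + i + 1)
  have hd2 := DD_ne hdeg hξ (n0 + j + 1)
  rw [div_eq_div_iff hd1 hd2] at hij
  rcases lt_or_gt_of_ne hne' with hlt | hlt
  · exact periodic_of_eq hdeg hξ (i := n0 + i) (j := n0 + j) (by omega) hij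
  · exact periodic_of_eq hdeg hξ (i := n0 + j) (j := n0 + i) (by omega) hij.symm

lemma polyToK_smul (c : Fq) (p : Polynomial Fq) : polyToK Fq (c • p) = HahnSeries.C c * polyToK Fq p := by
  rw [smul_eq_C_mul, map_mul, polyToK_C]

/-- Dirichlet's theorem. -/
lemma dirichlet {ξ : K Fq} (hξ : kabs Fq ξ ≤ 1) (h : ℕ) :
    ∃ a b c : Polynomial Fq, ¬ (a = 0 ∧ b = 0 ∧ c = 0) ∧
      (a.natDegree ≤ h ∧ b.natDegree ≤ h ∧ c.natDegree ≤ h) ∧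
      kabs Fq (LL ξ a b c) ≤ qq Fq ^ (-(2 * h + 2 : ℤ)) := by
  let V := degreeLT Fq (h + 1) × degreeLT Fq (h + 1) × degreeLT Fq (h + 1)
  let f : V →ₗ[Fq] (Fin (3 * h + 2) → Fq) :=
    { toFun := fun t i => (LL ξ t.1.1 t.2.1.1 t.2.2.1).coeff ((i : ℤ) - h)
      map_add' := by
        intro s t
        funext i
        simp only [Pi.add_apply, ← HahnSeries.coeff_add]
        congr 1
        show LL ξ (s.1.1 + t.1.1) (s.2.1.1 + t.2.1.1) (s.2.2.1 + t.2.2.1) = _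
        simp only [LL, map_add]
        ring
      map_smul' := by
        intro s t
        funext i
        simp only [Pi.smul_apply, ← HahnSeries.coeff_smul, RingHom.id_apply]
        congr 1
        rw [← HahnSeries.C_mul_eq_smul]
        show LL ξ (s • t.1.1) (s • t.2.1.1) (s • t.2.2.1) = _
        simp only [LL, polyToK_smul]
        ring }
  have e := (degreeLTEquiv Fq (h + 1))
  have : Module.Finite Fq (degreeLT Fq (h + 1)) := Module.Finite.equiv e.symm
  have hfr : Module.finrank Fq (degreeLT Fq (h + 1)) = h + 1 := by
    rw [e.finrank_eq]; simp
  have hker : LinearMap.ker f ≠ ⊥ := by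
    apply LinearMap.ker_ne_bot_of_finrank_lt
    simp only [V, Module.finrank_prod, hfr, Module.finrank_fin_fun]
    omega
  obtain ⟨t, ht, ht0⟩ := (Submodule.ne_bot_iff _).mp hker
  have hd : ∀ x : degreeLT Fq (h + 1), x.1.natDegree ≤ h := by
    intro x
    have := mem_degreeLT.mp x.2
    by_cases hx : x.1 = 0
    · simp [hx]
    · have := (natDegree_lt_iff_degree_lt hx).mpr this
      omega
  refine ⟨t.1.1, t.2.1.1, t.2.2.1, ?_, ⟨hd _, hd _, hd _⟩, ?_⟩
  · rintro ⟨h1, h2, h3⟩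
    apply ht0
    ext1
    · exact Subtype.ext h1
    · ext1
      · exact Subtype.ext h2
      · exact Subtype.ext h3
  · apply kabs_le_of_coeff
    intro j hj
    by_cases hj' : j < -h
    · apply coeff_eq_zero_of_kabs (n := -h) _ hj'
      rw [neg_neg, zpow_natCast]
      exact (forms_le hξ (pabs_le_of_natDegree_le (hd _)) (pabs_le_of_natDegree_le (hd _))
        (pabs_le_of_natDegree_le (hd _))).1
    · have hlt : (j + h).toNat < 3 * h + 2 := by omega
      have := congrFun (LinearMap.mem_ker.mp ht) ⟨(j + h).toNat, hlt⟩
      simp only [f, LinearMap.coe_mk, AddHom.coe_mk, Pi.zero_apply] at this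
      rw [← this]
      congr 1
      push_cast
      omega

lemma ds_real1 {L0 L1 X1 X2 : ℝ} (hL0 : 0 < L0) (hL1 : 0 < L1) (hX1 : 1 ≤ X1) (hX2 : X1 < X2)
    (h0 : L0 * X1 ^ 2 ≤ 1) (h1 : L1 * X2 ^ 2 ≤ 1) : L0 * L1 * X1 ^ 3 * X2 < 1 := by
  have hp : 0 < X2 := by linarith
  have e : (L0 * L1 * X1 ^ 3 * X2) * X2 = (L0 * X1 ^ 2) * (L1 * X2 ^ 2) * X1 := by ring
  have h2 : (L0 * X1 ^ 2) * (L1 * X2 ^ 2) * X1 ≤ 1 * 1 * X1 := by gcongr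
  have h3 : (L0 * L1 * X1 ^ 3 * X2) * X2 < 1 * X2 := by rw [e]; linarith
  exact lt_of_mul_lt_mul_right h3 hp.le

lemma ds_real2 {L1 L2 X0 X2 X3 : ℝ} (hL1 : 0 < L1) (hL2 : 0 < L2) (hX0 : 1 ≤ X0) (hX2 : X0 < X2)
    (hX3 : X2 < X3) (h0 : L1 * X2 ^ 2 ≤ 1) (h1 : L2 * X3 ^ 2 ≤ 1) : X0 * L1 * L2 * X2 ^ 3 < 1 := by
  have hp : 0 < X3 ^ 2 := by have : 0 < X3 := by linarith
                             positivity
  have e : (X0 * L1 * L2 * X2 ^ 3) * X3 ^ 2 = (L1 * X2 ^ 2) * (L2 * X3 ^ 2) * (X0 * X2) := by ring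
  have h2 : (L1 * X2 ^ 2) * (L2 * X3 ^ 2) * (X0 * X2) ≤ 1 * 1 * (X0 * X2) := by
    have : 0 < X0 * X2 := by apply mul_pos <;> linarith
    gcongr
  have h3 : (X0 * L1 * L2 * X2 ^ 3) * X3 ^ 2 < 1 * X3 ^ 2 := by rw [e]; nlinarith
  exact lt_of_mul_lt_mul_right h3 hp.le

/-- The core of the Davenport–Schmidt argument. -/
lemma ds_core {ξ : K Fq} (hξ : kabs Fq ξ ≤ 1) (a b c : ℕ → Polynomial Fq) (x e : ℕ → ℝ)
    (hx1 : ∀ k, 1 ≤ x k) (hx : ∀ k, x k < x (k + 1)) (he0 : ∀ k, 0 < e k) (he1 : ∀ k, e k ≤ 1)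
    (hE : ∀ k, x k ^ 3 * e k ≤ x (k + 1) ^ 3 * e (k + 1))
    (hL0 : ∀ k, LL ξ (a k) (b k) (c k) ≠ 0)
    (hL1 : ∀ k, kabs Fq (LL ξ (a (k + 1)) (b (k + 1)) (c (k + 1))) < kabs Fq (LL ξ (a k) (b k) (c k)))
    (hL2 : ∀ k, kabs Fq (LL ξ (a k) (b k) (c k)) * x (k + 1) ^ 2 ≤ 1)
    (hM : ∀ k, kabs Fq (MM ξ (a k) (b k)) < kabs Fq (LL ξ (a k) (b k) (c k)) * (x k ^ 3 * e k))
    (hN : ∀ k, kabs Fq (polyToK Fq (a k)) = x k)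
    (helim : Tendsto e atTop (nhds 0)) (hxlim : Tendsto x atTop atTop) : False := by
  obtain ⟨l, hl⟩ : ∃ l : ℕ → K Fq, ∀ k, l k = LL ξ (a k) (b k) (c k) := ⟨_, fun _ => rfl⟩
  obtain ⟨m, hm⟩ : ∃ m : ℕ → K Fq, ∀ k, m k = MM ξ (a k) (b k) := ⟨_, fun _ => rfl⟩
  obtain ⟨n, hn⟩ : ∃ n : ℕ → K Fq, ∀ k, n k = polyToK Fq (a k) := ⟨_, fun _ => rfl⟩
  simp only [← hl, ← hm, ← hn] at hL0 hL1 hL2 hM hN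
  have hl0 : ∀ k, 0 < kabs Fq (l k) := fun k => kabs_pos (hL0 k)
  have hx0 : ∀ k, 0 < x k := fun k => by linarith [hx1 k]
  have hm0 : ∀ k, 0 ≤ kabs Fq (m k) := fun k => kabs_nonneg _
  -- `E ≤ x^3`
  have hE3 : ∀ k, x k ^ 3 * e k ≤ x k ^ 3 := fun k => by
    have := pow_pos (hx0 k) 3
    nlinarith [he1 k]
  have hM3 : ∀ k, kabs Fq (m k) < kabs Fq (l k) * x k ^ 3 := fun k =>
    (hM k).trans_le (mul_le_mul_of_nonneg_left (hE3 k) (hl0 k).le)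
  have hMx : ∀ k, kabs Fq (m k) < x k := fun k => by
    have h1 : kabs Fq (l k) * x k ^ 2 ≤ 1 := by
      refine le_trans ?_ (hL2 k)
      have := hx k; have := hx0 k; have := hl0 k
      gcongr
    have h2 := hM3 k
    have := hx0 k
    nlinarith
  obtain ⟨yM, hyM⟩ : ∃ y : ℕ → K Fq, ∀ k, y k = l k * n (k + 1) - l (k + 1) * n k := ⟨_, fun _ => rfl⟩
  obtain ⟨yN, hyN⟩ : ∃ y : ℕ → K Fq, ∀ k, y k = l k * m (k + 1) - l (k + 1) * m k := ⟨_, fun _ => rfl⟩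
  have hyMabs : ∀ k, kabs Fq (yM k) = kabs Fq (l k) * x (k + 1) := fun k => by
    rw [hyM, kabs_sub_eq, kabs_mul, hN]
    rw [kabs_mul, kabs_mul, hN, hN]
    exact mul_lt_mul'' (hL1 k) (hx k) (hl0 _).le (hx0 _).le
  have hyM0 : ∀ k, 0 < kabs Fq (yM k) := fun k => by
    rw [hyMabs]; exact mul_pos (hl0 k) (hx0 _)
  -- bound on `θ`
  have hth : ∀ k, kabs Fq (yN k) * x (k + 2) ^ 2 < kabs Fq (yM k) * (x (k + 1) ^ 2 * e (k + 1)) := fun k => by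
    have hp : 0 < x (k + 2) ^ 2 := pow_pos (hx0 _) 2
    have hb : kabs Fq (yN k) < kabs Fq (l k) * (kabs Fq (l (k + 1)) * (x (k + 1) ^ 3 * e (k + 1))) := by
      rw [hyN]
      apply kabs_sub_lt'
      · rw [kabs_mul]
        exact mul_lt_mul_of_pos_left (hM (k + 1)) (hl0 k)
      · rw [kabs_mul]
        calc kabs Fq (l (k + 1)) * kabs Fq (m k)
            < kabs Fq (l (k + 1)) * (kabs Fq (l k) * (x k ^ 3 * e k)) :=
              mul_lt_mul_of_pos_left (hM k) (hl0 _)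
          _ ≤ kabs Fq (l (k + 1)) * (kabs Fq (l k) * (x (k + 1) ^ 3 * e (k + 1))) := by
              have := hE k; have := hl0 k; have := hl0 (k + 1)
              gcongr
          _ = _ := by ring
    calc kabs Fq (yN k) * x (k + 2) ^ 2
        < (kabs Fq (l k) * (kabs Fq (l (k + 1)) * (x (k + 1) ^ 3 * e (k + 1)))) * x (k + 2) ^ 2 :=
          mul_lt_mul_of_pos_right hb hp
      _ = (kabs Fq (l (k + 1)) * x (k + 2) ^ 2) * (kabs Fq (l k) * x (k + 1) * (x (k + 1) ^ 2 * e (k + 1))) := by ring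
      _ ≤ 1 * (kabs Fq (l k) * x (k + 1) * (x (k + 1) ^ 2 * e (k + 1))) := by
          have h1 := hL2 (k + 1)
          have : 0 < kabs Fq (l k) * x (k + 1) * (x (k + 1) ^ 2 * e (k + 1)) :=
            mul_pos (mul_pos (hl0 _) (hx0 _)) (mul_pos (pow_pos (hx0 _) 2) (he0 _))
          exact mul_le_mul_of_nonneg_right h1 this.le
      _ = _ := by rw [hyMabs, one_mul]
  -- monotonicity
  have key : ∀ k, kabs Fq (yN k) * kabs Fq (yM (k + 1)) ≤ kabs Fq (yN (k + 1)) * kabs Fq (yM k) := fun k => by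
    by_cases hD : a k * (b (k+1) * c (k+2) - b (k+2) * c (k+1)) - b k * (a (k+1) * c (k+2) - a (k+2) * c (k+1))
        + c k * (a (k+1) * b (k+2) - a (k+2) * b (k+1)) = 0
    · have hD' := congrArg (polyToK Fq) hD
      simp only [map_sub, map_add, map_mul, map_zero] at hD'
      have : yN k * yM (k + 1) = yN (k + 1) * yM k := by
        rw [← sub_eq_zero]
        calc yN k * yM (k + 1) - yN (k + 1) * yM k = - l (k+1) * 0 := by
              rw [← hD']
              simp only [hyN, hyM, hl, hm, hn, LL, MM]
              ring
          _ = 0 := mul_zero _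
      rw [← kabs_mul, ← kabs_mul, this]
    · have hD1 := one_le_pabs hD
      simp only [map_sub, map_add, map_mul] at hD1
      have e1 : (polyToK Fq (a k) * (polyToK Fq (b (k+1)) * polyToK Fq (c (k+2)) - polyToK Fq (b (k+2)) * polyToK Fq (c (k+1))) - polyToK Fq (b k) * (polyToK Fq (a (k+1)) * polyToK Fq (c (k+2)) - polyToK Fq (a (k+2)) * polyToK Fq (c (k+1)))
        + polyToK Fq (c k) * (polyToK Fq (a (k+1)) * polyToK Fq (b (k+2)) - polyToK Fq (a (k+2)) * polyToK Fq (b (k+1)))) =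
          l k * n (k+1) * m (k+2) - (l k * m (k+1) * n (k+2) - m k * l (k+1) * n (k+2) + m k * n (k+1) * l (k+2)
            + n k * l (k+1) * m (k+2) - n k * m (k+1) * l (k+2)) := by
        simp only [hl, hm, hn, LL, MM]
        ring
      rw [e1] at hD1
      have hB1 := ds_real1 (hl0 k) (hl0 (k+1)) (hx1 (k+1)) (hx (k+1)) (hL2 k) (hL2 (k+1))
      have hB2 := ds_real2 (hl0 (k+1)) (hl0 (k+2)) (hx1 k) ((hx k).trans (hx (k+1))) (hx (k+2)) (hL2 (k+1)) (hL2 (k+2))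
      have hl0k := hl0 k
      have hl1k := hl0 (k+1)
      have hl2k := hl0 (k+2)
      have hx0k := hx0 k
      have hx1k := hx0 (k+1)
      have hx2k := hx0 (k+2)
      have hxa := (hx k).le
      have hxb := (hx (k+1)).le
      have hM0 : kabs Fq (m k) ≤ kabs Fq (l k) * x (k+1) ^ 3 := by
        refine (hM3 k).le.trans ?_
        gcongr
      have hM1 := (hM3 (k+1)).le
      have hM2 := (hM3 (k+2)).le
      have hla := (hL1 (k+1)).le
      have hsmall : kabs Fq (l k * m (k+1) * n (k+2) - m k * l (k+1) * n (k+2) + m k * n (k+1) * l (k+2)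
            + n k * l (k+1) * m (k+2) - n k * m (k+1) * l (k+2)) < 1 := by
        apply kabs_sub_lt'
        · apply kabs_add_lt'
          · apply kabs_add_lt'
            · apply kabs_sub_lt'
              · refine lt_of_le_of_lt ?_ hB1
                simp only [kabs_mul, hN]
                calc _ ≤ kabs Fq (l k) * (kabs Fq (l (k+1)) * x (k+1) ^ 3) * x (k+2) := by gcongr
                  _ = _ := by ring
              · refine lt_of_le_of_lt ?_ hB1
                simp only [kabs_mul, hN]
                calc _ ≤ (kabs Fq (l k) * x (k+1) ^ 3) * kabs Fq (l (k+1)) * x (k+2) := by gcongr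
                  _ = _ := by ring
            · refine lt_of_le_of_lt ?_ hB1
              simp only [kabs_mul, hN]
              calc _ ≤ (kabs Fq (l k) * x (k+1) ^ 3) * x (k+2) * kabs Fq (l (k+1)) := by
                    gcongr
                _ = _ := by ring
          · refine lt_of_le_of_lt ?_ hB2
            simp only [kabs_mul, hN]
            calc _ ≤ x k * kabs Fq (l (k+1)) * (kabs Fq (l (k+2)) * x (k+2) ^ 3) := by gcongr
              _ = _ := by ring
        · refine lt_of_le_of_lt ?_ hB2
          simp only [kabs_mul, hN]
          calc _ ≤ x k * (kabs Fq (l (k+1)) * x (k+2) ^ 3) * kabs Fq (l (k+2)) := by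
                gcongr
                refine hM1.trans ?_
                gcongr
            _ = _ := by ring
      have hbig : 1 ≤ kabs Fq (l k * n (k+1) * m (k+2)) := by
        by_contra! hh
        exact absurd (kabs_sub_lt' hh hsmall) (not_lt.mpr hD1)
      rw [kabs_mul, kabs_mul, hN] at hbig
      have hm2 : x (k+1) ≤ kabs Fq (m (k+2)) := by
        have h1 := hL2 k
        by_contra! hh
        have : kabs Fq (l k) * x (k+1) * kabs Fq (m (k+2)) < kabs Fq (l k) * x (k+1) * x (k+1) :=
          mul_lt_mul_of_pos_left hh (mul_pos hl0k hx1k)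
        nlinarith
      have hyN1 : kabs Fq (yN (k+1)) = kabs Fq (l (k+1)) * kabs Fq (m (k+2)) := by
        rw [hyN, kabs_sub_eq, kabs_mul]
        rw [kabs_mul, kabs_mul]
        exact mul_lt_mul'' (hL1 (k+1)) ((hMx (k+1)).trans_le hm2) (hl0 _).le (hm0 _)
      rw [hyN1, hyMabs (k+1)]
      have h2 : kabs Fq (yN k) * x (k+2) ^ 2 ≤ kabs Fq (yM k) * x (k+1) ^ 2 := by
        refine (hth k).le.trans ?_
        have := he1 (k+1); have := (hyM0 k).le
        have h3 : x (k+1) ^ 2 * e (k+1) ≤ x (k+1) ^ 2 * 1 := by gcongr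
        rw [mul_one] at h3
        gcongr
      have h3 : kabs Fq (yN k) * x (k+2) ≤ kabs Fq (yM k) * x (k+1) := by
        have hle : (kabs Fq (yN k) * x (k+2)) * x (k+2) ≤ (kabs Fq (yM k) * x (k+1)) * x (k+2) := by
          calc _ = kabs Fq (yN k) * x (k+2) ^ 2 := by ring
            _ ≤ kabs Fq (yM k) * x (k+1) ^ 2 := h2
            _ = (kabs Fq (yM k) * x (k+1)) * x (k+1) := by ring
            _ ≤ _ := by
              have := (hyM0 k).le
              gcongr
        exact le_of_mul_le_mul_right hle hx2k
      calc kabs Fq (yN k) * (kabs Fq (l (k+1)) * x (k+2))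
          = kabs Fq (l (k+1)) * (kabs Fq (yN k) * x (k+2)) := by ring
        _ ≤ kabs Fq (l (k+1)) * (kabs Fq (yM k) * x (k+1)) := by gcongr
        _ ≤ kabs Fq (l (k+1)) * (kabs Fq (yM k) * kabs Fq (m (k+2))) := by
            have := (hyM0 k).le
            gcongr
        _ = _ := by ring
  -- `θ` vanishes identically
  have hmono : Monotone (fun k => kabs Fq (yN k) / kabs Fq (yM k)) := by
    apply monotone_nat_of_le_succ
    intro k
    rw [div_le_div_iff₀ (hyM0 _) (hyM0 _)]
    exact key k
  have hzero : ∀ k, yN k = 0 := fun k => by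
    have hle : kabs Fq (yN k) / kabs Fq (yM k) ≤ 0 := by
      have ht : Tendsto (fun j => e (j + 1)) atTop (nhds 0) := helim.comp (tendsto_add_atTop_nat 1)
      apply ge_of_tendsto ht
      filter_upwards [eventually_ge_atTop k] with j hj
      refine (hmono hj).trans ?_
      show kabs Fq (yN j) / kabs Fq (yM j) ≤ e (j+1)
      rw [div_le_iff₀ (hyM0 j)]
      have h1 := (hth j).le
      have h2 : x (j+1) ^ 2 ≤ x (j+2) ^ 2 := by
        have := hx0 (j+1); have := (hx (j+1)).le
        gcongr
      have h3 : kabs Fq (yN j) * x (j+2) ^ 2 ≤ (e (j+1) * kabs Fq (yM j)) * x (j+2) ^ 2 := by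
        refine h1.trans ?_
        have := he0 (j+1); have := hyM0 j
        calc _ = (e (j+1) * kabs Fq (yM j)) * x (j+1) ^ 2 := by ring
          _ ≤ _ := by gcongr
      exact le_of_mul_le_mul_right h3 (pow_pos (hx0 _) 2)
    have h0 : kabs Fq (yN k) ≤ 0 := by
      by_contra! hh
      exact absurd (div_pos hh (hyM0 k)) (not_lt.mpr hle)
    exact kabs_eq_zero.mp (le_antisymm h0 (kabs_nonneg _))
  -- the ratio `m / l` is constant
  obtain ⟨r, hr⟩ : ∃ r : K Fq, ∀ k, m k = r * l k := by
    refine ⟨m 0 / l 0, ?_⟩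
    intro k
    induction k with
    | zero => rw [div_mul_cancel₀ _ (hL0 0)]
    | succ k ih =>
      have h1 := hzero k
      rw [hyN, ih] at h1
      have h2 : l k * (m (k+1) - m 0 / l 0 * l (k+1)) = 0 := by rw [← h1]; ring
      rcases mul_eq_zero.mp h2 with h3 | h3
      · exact absurd h3 (hL0 k)
      · exact sub_eq_zero.mp h3
  have hyMle : ∀ k, kabs Fq (yM k) * x (k+1) ≤ 1 := fun k => by
    rw [hyMabs]
    have := hL2 k
    linarith [this, show kabs Fq (l k) * x (k+1) * x (k+1) = kabs Fq (l k) * x (k+1) ^ 2 by ring]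
  obtain ⟨k, hk⟩ : ∃ k, max 1 (kabs Fq r) < x (k+1) :=
    ((hxlim.comp (tendsto_add_atTop_nat 1)).eventually (eventually_gt_atTop _)).exists
  have hk1 : kabs Fq (yM k) < 1 := by
    have := hyMle k; have := hyM0 k; have := (le_max_left _ _).trans_lt hk
    nlinarith
  have hk2 : kabs Fq (r * yM k) < 1 := by
    rw [kabs_mul]
    have h1 := hyMle k; have h2 := hyM0 k; have h3 := (le_max_right _ _).trans_lt hk
    nlinarith
  have hab : a k * b (k+1) - a (k+1) * b k = 0 := by
    apply eq_zero_of_pabs_lt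
    have : polyToK Fq (a k * b (k+1) - a (k+1) * b k) = - (r * yM k) := by
      have e1 : polyToK Fq (b k) = m k - 2 * n k * ξ := by rw [hm, hn, MM]; ring
      have e2 : polyToK Fq (b (k+1)) = m (k+1) - 2 * n (k+1) * ξ := by rw [hm, hn, MM]; ring
      simp only [map_sub, map_mul, e1, e2, ← hn, hr, hyM]
      ring
    rw [this, kabs_neg]
    exact hk2
  have hab' := congrArg (polyToK Fq) hab
  simp only [map_sub, map_mul, map_zero] at hab'
  have hac : a k * c (k+1) - a (k+1) * c k = 0 := by
    apply eq_zero_of_pabs_lt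
    have : polyToK Fq (a k * c (k+1) - a (k+1) * c k) = - yM k := by
      have e3 : polyToK Fq (a k) * polyToK Fq (c (k+1)) - polyToK Fq (a (k+1)) * polyToK Fq (c k)
        = - yM k - ξ * (polyToK Fq (a k) * polyToK Fq (b (k+1)) - polyToK Fq (a (k+1)) * polyToK Fq (b k)) := by
        simp only [hyM, hl, hn, LL]
        ring
      rw [map_sub, map_mul, map_mul, e3, hab', mul_zero, sub_zero]
    rw [this, kabs_neg]
    exact hk1
  have hac' := congrArg (polyToK Fq) hac
  simp only [map_sub, map_mul, map_zero] at hac'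
  have : yM k = 0 := by
    have e4 : yM k = - (polyToK Fq (a k) * polyToK Fq (c (k+1)) - polyToK Fq (a (k+1)) * polyToK Fq (c k))
      - ξ * (polyToK Fq (a k) * polyToK Fq (b (k+1)) - polyToK Fq (a (k+1)) * polyToK Fq (b k)) := by
      simp only [hyM, hl, hn, LL]
      ring
    rw [e4, hab', hac']
    simp
  exact (hyM0 k).ne' (by rw [this, kabs_zero])

/-- The degree of the height of a triple of coefficients. -/
def deg3 (t : Polynomial Fq × Polynomial Fq × Polynomial Fq) : ℕ :=
  max t.1.natDegree (max t.2.1.natDegree t.2.2.natDegree)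

/-- The size of the linear form at a triple. -/
def Lf (ξ : K Fq) (t : Polynomial Fq × Polynomial Fq × Polynomial Fq) : ℝ :=
  kabs Fq (LL ξ t.1 t.2.1 t.2.2)

lemma deg3_le {t : Polynomial Fq × Polynomial Fq × Polynomial Fq} {h : ℕ} :
    deg3 t ≤ h ↔ t.1.natDegree ≤ h ∧ t.2.1.natDegree ≤ h ∧ t.2.2.natDegree ≤ h := by
  simp [deg3]

lemma triple_ne {t : Polynomial Fq × Polynomial Fq × Polynomial Fq} :
    t ≠ 0 ↔ ¬ (t.1 = 0 ∧ t.2.1 = 0 ∧ t.2.2 = 0) := by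
  simp [Prod.ext_iff]

lemma finite_deg3 (h : ℕ) :
    {t : Polynomial Fq × Polynomial Fq × Polynomial Fq | t ≠ 0 ∧ deg3 t ≤ h}.Finite := by
  apply ((finite_bdd (Fq := Fq) h).prod ((finite_bdd h).prod (finite_bdd h))).subset
  rintro t ⟨_, ht⟩
  rw [deg3_le] at ht
  exact ⟨ht.1, ht.2.1, ht.2.2⟩

lemma best_step {ξ : K Fq} (hξ : kabs Fq ξ ≤ 1)
    (hirr : ∀ t : Polynomial Fq × Polynomial Fq × Polynomial Fq, t ≠ 0 → 0 < Lf ξ t)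
    (t : Polynomial Fq × Polynomial Fq × Polynomial Fq) (ht : t ≠ 0)
    (hb : ∀ s, s ≠ 0 → deg3 s ≤ deg3 t → Lf ξ t ≤ Lf ξ s) :
    ∃ u, (u ≠ 0 ∧ ∀ s, s ≠ 0 → deg3 s ≤ deg3 u → Lf ξ u ≤ Lf ξ s) ∧ deg3 t < deg3 u ∧ Lf ξ u < Lf ξ t ∧
      ∀ s, s ≠ 0 → deg3 s < deg3 u → Lf ξ t ≤ Lf ξ s := by
  classical
  have hex : ∃ h : ℕ, ∃ s, s ≠ 0 ∧ deg3 s ≤ h ∧ Lf ξ s < Lf ξ t := by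
    have hlim : Tendsto (fun h : ℕ => ((qq Fq)⁻¹) ^ h) atTop (nhds 0) :=
      tendsto_pow_atTop_nhds_zero_of_lt_one (inv_nonneg.mpr (qq_pos Fq).le)
        (inv_lt_one_of_one_lt₀ (one_lt_qq Fq))
    obtain ⟨h, hh⟩ := (hlim.eventually (gt_mem_nhds (hirr t ht))).exists
    obtain ⟨a, b, c, h0, hd, hl⟩ := dirichlet hξ h
    refine ⟨h, (a, b, c), triple_ne.mpr h0, deg3_le.mpr hd, ?_⟩
    refine lt_of_le_of_lt hl (lt_of_le_of_lt ?_ hh)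
    rw [inv_pow, ← zpow_natCast, ← zpow_neg]
    apply zpow_le_zpow_right₀ (one_lt_qq Fq).le
    omega
  obtain ⟨s0, hs0, hs0d, hs0l⟩ := Nat.find_spec hex
  set h := Nat.find hex with hh
  obtain ⟨u, hu, hmin⟩ := Set.exists_min_image _ (Lf ξ) (finite_deg3 (Fq := Fq) h) ⟨s0, hs0, hs0d⟩
  have hul : Lf ξ u < Lf ξ t := (hmin s0 ⟨hs0, hs0d⟩).trans_lt hs0l
  have hud : deg3 u = h := by
    apply le_antisymm hu.2
    exact Nat.find_min' hex ⟨u, hu.1, le_rfl, hul⟩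
  refine ⟨u, ⟨hu.1, ?_⟩, ?_, hul, ?_⟩
  · intro s hs hsd
    exact hmin s ⟨hs, hud ▸ hsd⟩
  · by_contra! hle
    exact absurd (hb u hu.1 hle) (not_le.mpr hul)
  · intro s hs hsd
    by_contra! hlt
    have := Nat.find_min' hex ⟨s, hs, le_rfl, hlt⟩
    omega

lemma exists_min_seq {ξ : K Fq} (hξ : kabs Fq ξ ≤ 1)
    (hirr : ∀ t : Polynomial Fq × Polynomial Fq × Polynomial Fq, t ≠ 0 → 0 < Lf ξ t) :
    ∃ t : ℕ → Polynomial Fq × Polynomial Fq × Polynomial Fq, (∀ k, t k ≠ 0) ∧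
      StrictMono (fun k => deg3 (t k)) ∧ (∀ k, Lf ξ (t (k + 1)) < Lf ξ (t k)) ∧
      ∀ k, Lf ξ (t k) * (qq Fq ^ deg3 (t (k + 1))) ^ 2 ≤ 1 := by
  classical
  let G := {t : Polynomial Fq × Polynomial Fq × Polynomial Fq //
    t ≠ 0 ∧ ∀ s, s ≠ 0 → deg3 s ≤ deg3 t → Lf ξ t ≤ Lf ξ s}
  have h0 : Nonempty G := by
    obtain ⟨u, hu, hmin⟩ := Set.exists_min_image _ (Lf ξ) (finite_deg3 (Fq := Fq) 0)
      ⟨(1, 0, 0), by simp, by simp [deg3]⟩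
    refine ⟨⟨u, hu.1, ?_⟩⟩
    intro s hs hsd
    exact hmin s ⟨hs, hsd.trans hu.2⟩
  have hs : ∀ g : G, ∃ u : G, deg3 g.1 < deg3 u.1 ∧ Lf ξ u.1 < Lf ξ g.1 ∧
      ∀ s, s ≠ 0 → deg3 s < deg3 u.1 → Lf ξ g.1 ≤ Lf ξ s := by
    intro g
    obtain ⟨u, h1, h2⟩ := best_step hξ hirr g.1 g.2.1 g.2.2
    exact ⟨⟨u, h1⟩, h2⟩
  choose F hF using hs
  obtain ⟨g0⟩ := h0
  let t : ℕ → G := fun k => F^[k] g0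
  have ht : ∀ k, t (k + 1) = F (t k) := fun k => Function.iterate_succ_apply' F k g0
  refine ⟨fun k => (t k).1, fun k => (t k).2.1, ?_, ?_, ?_⟩
  · apply strictMono_nat_of_lt_succ
    intro k
    show deg3 (t k).1 < deg3 (t (k + 1)).1
    rw [ht]
    exact (hF (t k)).1
  · intro k
    show Lf ξ (t (k + 1)).1 < _
    rw [ht]
    exact (hF (t k)).2.1
  · intro k
    show Lf ξ (t k).1 * (qq Fq ^ deg3 (t (k + 1)).1) ^ 2 ≤ 1
    rw [ht]
    obtain ⟨h1, h2, h3⟩ := hF (t k)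
    obtain ⟨h, hh⟩ : ∃ h, deg3 (F (t k)).1 = h + 1 := ⟨deg3 (F (t k)).1 - 1, by omega⟩
    obtain ⟨a, b, c, h0, hd, hl⟩ := dirichlet hξ h
    have h4 := h3 (a, b, c) (triple_ne.mpr h0) (by
      have := (deg3_le (t := (a, b, c))).mpr hd
      omega)
    have h5 : Lf ξ (t k).1 ≤ qq Fq ^ (-(2 * h + 2 : ℤ)) := h4.trans hl
    rw [hh]
    have hq := qq_pos Fq
    calc _ ≤ qq Fq ^ (-(2 * h + 2 : ℤ)) * (qq Fq ^ (h + 1)) ^ 2 := by gcongr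
      _ = 1 := by
        rw [← pow_mul, ← zpow_natCast, ← zpow_add₀ hq.ne']
        push_cast
        ring_nf
        simp

lemma lead_eq {ξ : K Fq} (hξ : kabs Fq ξ ≤ 1)
    {t : Polynomial Fq × Polynomial Fq × Polynomial Fq} (ht : t ≠ 0)
    (hL : Lf ξ t < qq Fq ^ deg3 t) (hM : kabs Fq (MM ξ t.1 t.2.1) < qq Fq ^ deg3 t) :
    kabs Fq (polyToK Fq t.1) = qq Fq ^ deg3 t := by
  have hle := deg3_le.mp (le_refl (deg3 t))
  apply le_antisymm (pabs_le_of_natDegree_le hle.1)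
  by_contra! hlt
  set h := max (Lf ξ t) (max (kabs Fq (MM ξ t.1 t.2.1)) (kabs Fq (polyToK Fq t.1))) with hh
  have hlt' : h < qq Fq ^ deg3 t := max_lt hL (max_lt hM hlt)
  have ha : kabs Fq (polyToK Fq t.1) ≤ h := (le_max_right _ _).trans (le_max_right _ _)
  obtain ⟨hb, hc⟩ := coeffs_le hξ (a := t.1) (b := t.2.1) (c := t.2.2) (h := h) (le_max_left _ _)
    ((le_max_left _ _).trans (le_max_right _ _)) ha
  have hex : ∃ p : Polynomial Fq, p ≠ 0 ∧ p.natDegree = deg3 t ∧ kabs Fq (polyToK Fq p) ≤ h := by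
    have haux : ∀ p : Polynomial Fq, p.natDegree = deg3 t → kabs Fq (polyToK Fq p) ≤ h →
        (p = 0 → deg3 t = 0) := by
      intro p hp _ h0
      rw [← hp, h0, natDegree_zero]
    by_cases h0 : deg3 t = 0
    · rw [h0] at hle ⊢
      by_contra! hno
      have hz : ∀ p : Polynomial Fq, p.natDegree ≤ 0 → kabs Fq (polyToK Fq p) ≤ h → p = 0 := by
        intro p hp hph
        by_contra hp0
        exact absurd (hno p hp0 (by omega)) (not_lt.mpr hph)
      apply triple_ne.mp ht
      exact ⟨hz _ hle.1 ha, hz _ hle.2.1 hb, hz _ hle.2.2 hc⟩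
    · have : deg3 t = t.1.natDegree ∨ deg3 t = t.2.1.natDegree ∨ deg3 t = t.2.2.natDegree := by
        unfold deg3
        omega
      rcases this with h1 | h1 | h1
      · exact ⟨_, fun h2 => h0 (by rw [h1, h2, natDegree_zero]), h1.symm, ha⟩
      · exact ⟨_, fun h2 => h0 (by rw [h1, h2, natDegree_zero]), h1.symm, hb⟩
      · exact ⟨_, fun h2 => h0 (by rw [h1, h2, natDegree_zero]), h1.symm, hc⟩
  obtain ⟨p, hp0, hpd, hph⟩ := hex
  rw [pabs_of_ne hp0, hpd] at hph
  linarith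

/-- The conclusion of the Davenport–Schmidt argument. -/
lemma ds_main {ξ : K Fq} (hξ : kabs Fq ξ ≤ 1)
    (hirr : ∀ t : Polynomial Fq × Polynomial Fq × Polynomial Fq, t ≠ 0 → 0 < Lf ξ t)
    {η : ℝ} (hη : 0 < η) (hη3 : η ≤ 3) (h0 : ℕ) :
    ∃ t : Polynomial Fq × Polynomial Fq × Polynomial Fq, t ≠ 0 ∧ h0 ≤ deg3 t ∧
      Lf ξ t * (qq Fq ^ deg3 t) ^ (3 - η) ≤ kabs Fq (MM ξ t.1 t.2.1) := by
  by_contra! hno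
  obtain ⟨t, ht0, htm, htL, htX⟩ := exists_min_seq hξ hirr
  have hq := one_lt_qq Fq
  have hdk : ∀ k, k ≤ deg3 (t k) := fun k => htm.le_apply
  let T : ℕ → Polynomial Fq × Polynomial Fq × Polynomial Fq := fun k => t (k + (h0 + 1))
  have hTd : ∀ k, k + (h0 + 1) ≤ deg3 (T k) := fun k => hdk _
  let x : ℕ → ℝ := fun k => qq Fq ^ deg3 (T k)
  have hx1 : ∀ k, 1 ≤ x k := fun k => one_le_pow₀ hq.le
  have hxp : ∀ k, 0 < x k := fun k => by linarith [hx1 k]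
  have hTs : ∀ k, deg3 (T k) < deg3 (T (k + 1)) := fun k => htm (by omega)
  have hx : ∀ k, x k < x (k + 1) := fun k => pow_lt_pow_right₀ hq (hTs k)
  have hTL : ∀ k, Lf ξ (T (k + 1)) < Lf ξ (T k) := fun k => by
    have := htL (k + (h0 + 1))
    simp only [T]
    rwa [show k + 1 + (h0 + 1) = k + (h0 + 1) + 1 by ring]
  have hTX : ∀ k, Lf ξ (T k) * x (k + 1) ^ 2 ≤ 1 := fun k => by
    have := htX (k + (h0 + 1))
    simp only [x, T]
    rwa [show k + 1 + (h0 + 1) = k + (h0 + 1) + 1 by ring]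
  let e : ℕ → ℝ := fun k => x k ^ (-η)
  have hE : ∀ k, x k ^ 3 * e k = x k ^ (3 - η) := fun k => by
    simp only [e]
    rw [← Real.rpow_natCast, ← Real.rpow_add (hxp k)]
    norm_num [sub_eq_add_neg]
  have he1 : ∀ k, e k ≤ 1 := fun k => Real.rpow_le_one_of_one_le_of_nonpos (hx1 k) (by linarith)
  have hM : ∀ k, kabs Fq (MM ξ (T k).1 (T k).2.1) < Lf ξ (T k) * (x k ^ 3 * e k) := fun k => by
    rw [hE]
    exact hno (T k) (ht0 _) (by have := hTd k; omega)
  have hLp : ∀ k, 0 < Lf ξ (T k) := fun k => hirr _ (ht0 _)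
  have hLX : ∀ k, Lf ξ (T k) * x k ^ 2 ≤ 1 := fun k => by
    refine le_trans ?_ (hTX k)
    have := (hx k).le; have := hxp k; have := hLp k
    gcongr
  have hN : ∀ k, kabs Fq (polyToK Fq (T k).1) = x k := fun k => by
    have h1 := hLX k
    have h2 := hx1 k
    have h3 := hLp k
    have hx1' : 1 < x k := one_lt_pow₀ hq (by have := hTd k; omega)
    apply lead_eq hξ (ht0 _)
    · show Lf ξ (T k) < x k
      nlinarith
    · show _ < x k
      refine (hM k).trans_le ?_
      have h4 : x k ^ 3 * e k ≤ x k ^ 3 := by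
        have := pow_pos (hxp k) 3
        nlinarith [he1 k]
      calc Lf ξ (T k) * (x k ^ 3 * e k) ≤ Lf ξ (T k) * x k ^ 3 := by gcongr
        _ = (Lf ξ (T k) * x k ^ 2) * x k := by ring
        _ ≤ 1 * x k := by gcongr
        _ = x k := one_mul _
  have hxlim : Tendsto x atTop atTop := by
    refine (tendsto_pow_atTop_atTop_of_one_lt hq).comp ?_
    apply tendsto_atTop_mono (fun k => (Nat.le_add_right k (h0 + 1)).trans (hTd k)) tendsto_id
  refine ds_core hξ (fun k => (T k).1) (fun k => (T k).2.1) (fun k => (T k).2.2) x e hx1 hx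
    (fun k => Real.rpow_pos_of_pos (hxp k) _) he1 ?_ ?_ hTL hTX hM hN ?_ hxlim
  · intro k
    rw [hE, hE]
    exact Real.rpow_le_rpow (hxp k).le (hx k).le (by linarith)
  · intro k
    have := hLp k
    intro h
    simp only [Lf, h, kabs_zero, lt_irrefl] at this
  · exact (tendsto_rpow_neg_atTop hη).comp hxlim

lemma two_le_wStar {v : L Fq → ℝ} (hv : IsAbsExt Fq v) {ξ : K Fq} (hξ : kabs Fq ξ ≤ 1)
    (hirr : ∀ t : Polynomial Fq × Polynomial Fq × Polynomial Fq, t ≠ 0 → 0 < Lf ξ t) :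
    (2 : EReal) ≤ wStarExp Fq v 2 ξ := by
  have hq := one_lt_qq Fq
  have hmain : ∀ w : ℝ, 0 < w → w < 2 → (w : EReal) ≤ wStarExp Fq v 2 ξ := by
    intro w hw0 hw2
    apply le_wStar
    intro δ hδ
    have hlim : Tendsto (fun h : ℕ => ((qq Fq)⁻¹) ^ h) atTop (nhds 0) :=
      tendsto_pow_atTop_nhds_zero_of_lt_one (inv_nonneg.mpr (qq_pos Fq).le)
        (inv_lt_one_of_one_lt₀ (one_lt_qq Fq))
    obtain ⟨h0, hh0⟩ := (hlim.eventually (gt_mem_nhds hδ)).exists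
    obtain ⟨t, ht, htd, htM⟩ := ds_main hξ hirr (η := 2 - w) (by linarith) (by linarith) h0
    rw [show 3 - (2 - w) = w + 1 by ring] at htM
    set X := qq Fq ^ deg3 t with hX
    have hX1 : 1 ≤ X := one_le_pow₀ hq.le
    have hXp : 0 < X := by linarith
    have hLp := hirr t ht
    have hXw : 0 < X ^ (w + 1) := Real.rpow_pos_of_pos hXp _
    have hMp : 0 < kabs Fq (MM ξ t.1 t.2.1) := (mul_pos hLp hXw).trans_le htM
    have hL0 : LL ξ t.1 t.2.1 t.2.2 ≠ 0 := fun h => by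
      simp only [Lf, h, kabs_zero, lt_irrefl] at hLp
    have hM0 : MM ξ t.1 t.2.1 ≠ 0 := fun h => by
      simp only [h, kabs_zero, lt_irrefl] at hMp
    obtain ⟨α, h1, h2, h3, h4, h5⟩ := exists_root hv hL0 hM0
    have hd := deg3_le.mp (le_refl (deg3 t))
    have hH : heightAlg Fq α ≤ X := h3.trans (Hpoly_tri_le (pabs_le_of_natDegree_le hd.1)
      (pabs_le_of_natDegree_le hd.2.1) (pabs_le_of_natDegree_le hd.2.2))
    have h6 : v (toL Fq ξ - α) ≤ X ^ (-w - 1) := by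
      refine h5.trans ?_
      rw [div_le_iff₀ hMp, show -w - 1 = -(w + 1) by ring, Real.rpow_neg hXp.le,
        ← div_eq_inv_mul, le_div_iff₀ hXw]
      exact htM
    refine ⟨α, h1, h2, h4, ?_, ?_⟩
    · refine lt_of_le_of_lt h6 (lt_of_le_of_lt ?_ hh0)
      calc X ^ (-w - 1) ≤ X ^ (-1 : ℝ) := Real.rpow_le_rpow_of_exponent_le hX1 (by linarith)
        _ = X⁻¹ := Real.rpow_neg_one X
        _ ≤ _ := by
          rw [inv_pow]
          have := qq_pos Fq
          have h7 : qq Fq ^ h0 ≤ X := pow_le_pow_right₀ hq.le htd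
          gcongr
    · refine h6.trans ?_
      have hpos : 0 < heightAlg Fq α := by linarith [one_le_heightAlg h1]
      exact Real.rpow_le_rpow_of_nonpos hpos hH (by linarith)
  apply le_of_forall_lt
  intro c hc
  obtain ⟨w, hw1, hw2⟩ := EReal.lt_iff_exists_real_btwn.mp (max_lt hc (show (0 : EReal) < 2 by norm_num))
  have hw0 : (0 : EReal) < w := (le_max_right _ _).trans_lt hw1
  refine ((le_max_left _ _).trans_lt hw1).trans_le (hmain w ?_ ?_)
  · exact_mod_cast hw0
  · have h2 : ((2 : ℝ) : EReal) = 2 := rfl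
    rw [← h2] at hw2
    exact_mod_cast hw2

lemma wStar_set_sub {v : L Fq → ℝ} (hv : IsAbsExt Fq v) {ξ : K Fq} (hξ : kabs Fq ξ ≤ 1)
    (hirr : ∀ t : Polynomial Fq × Polynomial Fq × Polynomial Fq, t ≠ 0 → 0 < Lf ξ t)
    {w : ℝ} (hw : 0 ≤ w)
    (hinf : {α : L Fq | IsAlgElem Fq α ∧ degAlg Fq α ≤ 2 ∧ 0 < v (toL Fq ξ - α) ∧
      v (toL Fq ξ - α) ≤ heightAlg Fq α ^ (-w - 1)}.Infinite) : (w : EReal) ≤ wExp Fq 2 ξ := by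
  apply le_sSup
  refine ⟨w, rfl, ?_⟩
  intro hfin
  apply hinf
  have hroots : ∀ P : Polynomial (Polynomial Fq), P ≠ 0 → {α : L Fq | evalL Fq P α = 0}.Finite := by
    intro P hP
    have h1 : P.map (φ Fq) ≠ 0 := (Polynomial.map_ne_zero_iff φ_inj).mpr hP
    refine (Polynomial.finite_setOf_isRoot h1).subset ?_
    intro α hα
    simp only [Set.mem_setOf_eq, IsRoot.def, eval_map]
    exact hα
  refine Set.Finite.subset (Set.Finite.biUnion (hfin.subset (Set.inter_subset_left (t := {P | P ≠ 0})))
    (fun P hP => hroots P hP.2)) ?_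
  rintro α ⟨hα, hd, hv0, hvle⟩
  have hmp := minPolyPrim_spec hα
  set P := minPolyPrim Fq α with hP
  have hP0 : P ≠ 0 := hmp.2.1.ne_zero
  have hd2 : P.natDegree ≤ 2 := hd
  have hPt := eq_tri hd2
  have hroot : evalL Fq P α = 0 := hmp.2.2.2.2
  have hH : heightAlg Fq α = Hpoly Fq P := rfl
  rw [hH] at hvle
  have hH1 : 1 ≤ Hpoly Fq P := one_le_Hpoly hP0
  have hHp : 0 < Hpoly Fq P := by linarith
  have hv1 : v (toL Fq ξ - α) ≤ 1 := hvle.trans (Real.rpow_le_one_of_one_le_of_nonpos hH1 (by linarith))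
  have hvξ : v (toL Fq ξ) ≤ 1 := by rw [hv.extends_kabs]; exact hξ
  have hvα : v α ≤ 1 := by
    have e : α = toL Fq ξ + -(toL Fq ξ - α) := by ring
    rw [e]
    refine (hv.add_le _ _).trans (max_le hvξ ?_)
    rw [v_neg hv]
    exact hv1
  have hval : toL Fq (evalK Fq P ξ) = (toL Fq ξ - α) * (φ Fq (P.coeff 2) * (toL Fq ξ + α) + φ Fq (P.coeff 1)) := by
    have h1 : toL Fq (evalK Fq P ξ) = φ Fq (P.coeff 2) * toL Fq ξ ^ 2 + φ Fq (P.coeff 1) * toL Fq ξ + φ Fq (P.coeff 0) := by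
      conv_lhs => rw [hPt, evalK_tri]
      simp only [LL, map_add, map_mul, map_pow, toL_polyToK]
    have h2 : φ Fq (P.coeff 2) * α ^ 2 + φ Fq (P.coeff 1) * α + φ Fq (P.coeff 0) = 0 := by
      rw [← evalL_tri, ← hPt, hroot]
    rw [h1]
    linear_combination h2
  have hcoef : ∀ i, v (φ Fq (P.coeff i)) ≤ Hpoly Fq P := by
    intro i
    rw [← toL_polyToK, hv.extends_kabs]
    exact le_Hpoly P i
  have hfac : v (φ Fq (P.coeff 2) * (toL Fq ξ + α) + φ Fq (P.coeff 1)) ≤ Hpoly Fq P := by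
    refine (hv.add_le _ _).trans (max_le ?_ (hcoef 1))
    rw [hv.map_mul]
    calc _ ≤ Hpoly Fq P * 1 := by
          apply mul_le_mul (hcoef 2) _ (hv.nonneg _) hHp.le
          exact (hv.add_le _ _).trans (max_le hvξ hvα)
      _ = _ := mul_one _
  have hpos : 0 < kabs Fq (evalK Fq P ξ) := by
    rw [hPt, evalK_tri]
    apply hirr (P.coeff 2, P.coeff 1, P.coeff 0)
    rw [triple_ne]
    rintro ⟨h1, h2, h3⟩
    apply hP0
    rw [hPt]
    simp only at h1 h2 h3
    rw [h1, h2, h3]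
    simp [tri]
  simp only [Set.mem_iUnion]
  refine ⟨P, ⟨⟨hd2, hpos, ?_⟩, hP0⟩, hroot⟩
  rw [← hv.extends_kabs, hval, hv.map_mul]
  calc _ ≤ Hpoly Fq P ^ (-w - 1) * Hpoly Fq P := mul_le_mul hvle hfac (hv.nonneg _) (by positivity)
    _ = Hpoly Fq P ^ (-w) := by
      rw [Real.rpow_sub_one hHp.ne', div_mul_cancel₀ _ hHp.ne']

lemma wStar_le_wExp {v : L Fq → ℝ} (hv : IsAbsExt Fq v) {ξ : K Fq} (hξ : kabs Fq ξ ≤ 1)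
    (hirr : ∀ t : Polynomial Fq × Polynomial Fq × Polynomial Fq, t ≠ 0 → 0 < Lf ξ t) :
    wStarExp Fq v 2 ξ ≤ wExp Fq 2 ξ := by
  have h2 := two_le_wStar hv hξ hirr
  have h0 : (0 : EReal) < wStarExp Fq v 2 ξ := lt_of_lt_of_le (by norm_num) h2
  have h0' : (0 : EReal) ≤ wExp Fq 2 ξ := by
    obtain ⟨x, ⟨w, rfl, hw⟩, hx⟩ := lt_sSup_iff.mp h0
    have hw0 : 0 < w := by exact_mod_cast hx
    exact hx.le.trans (wStar_set_sub hv hξ hirr hw0.le hw)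
  apply sSup_le
  rintro x ⟨w, rfl, hw⟩
  by_cases hw0 : 0 ≤ w
  · exact wStar_set_sub hv hξ hirr hw0 hw
  · refine le_trans ?_ h0'
    exact_mod_cast (not_le.mp hw0).le

lemma flatten_replicate_get {A : Type*} (V : List A) (k : ℕ) (W : List A) (hW : W <+: V) (i : ℕ)
    (h : i < ((List.replicate k V).flatten ++ W).length) (hV : 0 < V.length) :
    ((List.replicate k V).flatten ++ W)[i] = V[i % V.length]'(Nat.mod_lt _ hV) := by
  induction k generalizing i with
  | zero =>
    simp only [List.replicate_zero, List.flatten_nil, List.nil_append] at h ⊢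
    have hle := hW.length_le
    rw [List.IsPrefix.getElem hW h]
    congr 1
    rw [Nat.mod_eq_of_lt (by omega)]
  | succ k ih =>
    simp only [List.replicate_succ, List.flatten_cons, List.append_assoc] at h ⊢
    by_cases hi : i < V.length
    · rw [List.getElem_append_left hi]
      congr 1
      rw [Nat.mod_eq_of_lt hi]
    · rw [List.getElem_append_right (by omega), ih]
      congr 1
      rw [Nat.mod_eq_sub_mod (by omega : V.length ≤ i)]

lemma word_period {A : Type*} {b : ℕ → A} {U V : List A} {w : ℝ} (hV : V ≠ [])
    (h : IsPrefixOfSeq (U ++ wordPow V w) b) :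
    ∀ i, i + V.length < (wordPow V w).length → b (U.length + i) = b (U.length + V.length + i) := by
  intro i hi
  have hV0 : 0 < V.length := List.length_pos_iff.mpr hV
  have hb : ∀ j (hj : j < (wordPow V w).length), b (U.length + j) = V[j % V.length]'(Nat.mod_lt _ hV0) := by
    intro j hj
    have h1 := h (U.length + j) (by rw [List.length_append]; omega)
    rw [← h1, List.get_eq_getElem]
    simp only
    rw [List.getElem_append_right (by omega)]
    simp only [Nat.add_sub_cancel_left]
    exact flatten_replicate_get V _ _ ⟨_, List.take_append_drop _ _⟩ j hj hV0
  rw [hb i (by omega), add_assoc, hb (V.length + i) (by omega)]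
  congr 1
  rw [Nat.add_mod_left]

/-- Condition `(*)_ρ` in terms of indices. -/
lemma cond_index {A : Type*} {b : ℕ → A} (hnup : ¬ UltimatelyPeriodic b) {ρ : ℝ} (hρ : 1 ≤ ρ)
    (h : SatisfiesCond b ρ) (R : ℕ) :
    ∃ r s t : ℕ, 1 ≤ s ∧ R ≤ r + s ∧ ρ * ((r : ℝ) + s) ≤ (r : ℝ) + s + t ∧
      ∀ i < t, b (r + i) = b (r + s + i) := by
  obtain ⟨U, V, w, hV, hw, hpre, hlen, hmono⟩ := h
  have hV0 : ∀ n, 0 < (V n).length := fun n => List.length_pos_iff.mpr (hV n)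
  by_cases hex : ∃ n, R ≤ (U n).length + (V n).length
  · obtain ⟨n, hn⟩ := hex
    have hl := hlen n
    have hge : (V n).length ≤ (wordPow (V n) (w n)).length := by
      have h1 : ((((U n).length + (V n).length : ℕ) : ℝ)) ≤ (((U n).length + (wordPow (V n) (w n)).length : ℕ) : ℝ) := by
        refine le_trans ?_ hl
        exact le_mul_of_one_le_left (Nat.cast_nonneg _) hρ
      have := Nat.cast_le.mp h1
      omega
    refine ⟨(U n).length, (V n).length, (wordPow (V n) (w n)).length - (V n).length, hV0 n, hn, ?_, ?_⟩
    · rw [Nat.cast_sub hge]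
      push_cast at hl
      linarith
    · intro i hi
      exact word_period (hV n) (hpre n) i (by omega)
  · push Not at hex
    exfalso
    apply hnup
    refine ⟨R, R.factorial, Nat.factorial_pos R, ?_⟩
    intro i hi
    have hle : i + R.factorial + R + 1 ≤ (wordPow (V (i + R.factorial + R + 1)) (w (i + R.factorial + R + 1))).length :=
      hmono.le_apply
    set n := i + R.factorial + R + 1
    have hn := hex n
    have hper := word_period (hV n) (hpre n)
    obtain ⟨d, hd⟩ : (V n).length ∣ R.factorial := Nat.dvd_factorial (hV0 n) (by omega)
    have hk : ∀ k, k ≤ d → b (i + (V n).length * k) = b i := by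
      intro k
      induction k with
      | zero => intro _; simp
      | succ k ih =>
        intro hkd
        rw [← ih (by omega)]
        have h2 : (V n).length * k + (V n).length ≤ R.factorial := by
          rw [hd, ← Nat.mul_succ]
          exact Nat.mul_le_mul_left _ hkd
        have h3 := hper (i + (V n).length * k - (U n).length) (by omega)
        rw [show (U n).length + (i + (V n).length * k - (U n).length) = i + (V n).length * k by omega,
          show (U n).length + (V n).length + (i + (V n).length * k - (U n).length) = i + (V n).length * (k + 1) by
            rw [Nat.mul_succ]; omega] at h3
        exact h3.symm
    rw [hd]
    exact hk d le_rfl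

lemma W_step {b : ℕ → Polynomial Fq} (ξ : K Fq) {i j : ℕ} (h : b i = b j) :
    DD ξ b (i+1) * DD ξ b (j+1+1) - DD ξ b (i+1+1) * DD ξ b (j+1) =
      - (DD ξ b i * DD ξ b (j+1) - DD ξ b (i+1) * DD ξ b j) := by
  have h1 := DD_add_two ξ b i
  have h2 := DD_add_two ξ b j
  rw [show i + 1 + 1 = i + 2 by ring, show j + 1 + 1 = j + 2 by ring, h1, h2, h]
  ring

lemma W_iter {b : ℕ → Polynomial Fq} (ξ : K Fq) {r u : ℕ} (t : ℕ) (h : ∀ i < t, b (r + i) = b (u + i)) :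
    kabs Fq (DD ξ b (r+t) * DD ξ b (u+t+1) - DD ξ b (r+t+1) * DD ξ b (u+t)) =
      kabs Fq (DD ξ b r * DD ξ b (u+1) - DD ξ b (r+1) * DD ξ b u) := by
  induction t with
  | zero => rfl
  | succ t ih =>
    rw [← ih (fun i hi => h i (by omega))]
    have := W_step ξ (h t (by omega))
    rw [show r + (t + 1) = r + t + 1 by ring, show u + (t + 1) = u + t + 1 by ring, this, kabs_neg]

lemma gg_iter {b : ℕ → Polynomial Fq} {r u : ℕ} (t : ℕ) (h : ∀ i < t, b (r + i) = b (u + i)) :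
    gg b (r + t) + gg b u = gg b (u + t) + gg b r := by
  induction t with
  | zero => simp [add_comm]
  | succ t ih =>
    have := ih (fun i hi => h i (by omega))
    rw [← add_assoc, ← add_assoc, gg_succ, gg_succ, h t (by omega)]
    omega

/-- The quadratic polynomial attached to a repetition in the sequence of partial quotients. -/
lemma dio_poly {b : ℕ → Polynomial Fq} (hdeg : ∀ n, 1 ≤ (b n).natDegree)
    (hnup : ¬ UltimatelyPeriodic b) {ξ : K Fq} (hξ : IsCFOf Fq ξ (cfA Fq b))
    {r s t : ℕ} (hs : 1 ≤ s) (h : ∀ i < t, b (r + i) = b (r + s + i)) :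
    ∃ A B E : Polynomial Fq, LL ξ A B E ≠ 0 ∧ MM ξ A B ≠ 0 ∧
      Hpoly Fq (tri A B E) ≤ qq Fq ^ ((gg b r : ℝ) + gg b (r + s)) ∧
      kabs Fq (LL ξ A B E) ≤ qq Fq ^ (-(2 * (gg b (r + s + t) : ℝ) + gg b r - gg b (r + s))) ∧
      kabs Fq (LL ξ A B E) / kabs Fq (MM ξ A B) ≤ qq Fq ^ (-(2 * (gg b (r + s + t) : ℝ))) := by
  have hq := one_lt_qq Fq
  have hqp := qq_pos Fq
  have hxi := xi_abs hdeg hξ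
  set A := Qs b r * Qs b (r+s+1) - Qs b (r+1) * Qs b (r+s) with hA
  set B := -(Qs b r * Ps b (r+s+1) + Ps b r * Qs b (r+s+1)) + (Qs b (r+1) * Ps b (r+s) + Ps b (r+1) * Qs b (r+s)) with hB
  set E := Ps b r * Ps b (r+s+1) - Ps b (r+1) * Ps b (r+s) with hE
  have hLL : LL ξ A B E = DD ξ b r * DD ξ b (r+s+1) - DD ξ b (r+1) * DD ξ b (r+s) := by
    simp only [LL, DD, hA, hB, hE, map_sub, map_add, map_mul, map_neg]
    ring
  have hMM : MM ξ A B = polyToK Fq (Qs b (r+s+1)) * DD ξ b r + (polyToK Fq (Qs b r) * DD ξ b (r+s+1)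
      - polyToK Fq (Qs b (r+1)) * DD ξ b (r+s) - polyToK Fq (Qs b (r+s)) * DD ξ b (r+1)) := by
    simp only [MM, DD, hA, hB, map_sub, map_add, map_mul, map_neg]
    ring
  have hglt : gg b r < gg b (r+s) := gg_lt hdeg (by omega)
  have hdom : kabs Fq (polyToK Fq (Qs b (r+s+1)) * DD ξ b r) = qq Fq ^ gg b (r+s) * (qq Fq ^ gg b r)⁻¹ := by
    rw [kabs_mul, Qs_abs hdeg, DD_abs hdeg hξ]
  have hone : 1 ≤ qq Fq ^ gg b (r+s) * (qq Fq ^ gg b r)⁻¹ := by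
    rw [← div_eq_mul_inv, one_le_div (pow_pos hqp _)]
    exact pow_le_pow_right₀ hq.le hglt.le
  have hMabs : kabs Fq (MM ξ A B) = qq Fq ^ gg b (r+s) * (qq Fq ^ gg b r)⁻¹ := by
    rw [hMM, kabs_add_eq, hdom]
    rw [hdom]
    apply kabs_sub_lt'
    · apply kabs_sub_lt'
      · refine lt_of_lt_of_le ?_ hone
        rw [kabs_mul, DD_abs hdeg hξ, ← div_eq_mul_inv, div_lt_one (pow_pos hqp _)]
        refine (Qs_abs_lt hdeg r).trans_le ?_
        exact pow_le_pow_right₀ hq.le (gg_mono b (by omega))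
      · refine lt_of_lt_of_le ?_ hone
        rw [kabs_mul, DD_abs hdeg hξ, Qs_abs hdeg, ← div_eq_mul_inv, div_lt_one (pow_pos hqp _)]
        exact pow_lt_pow_right₀ hq hglt
    · rw [kabs_mul, ← DD_abs hdeg hξ]
      exact mul_lt_mul'' (Qs_abs_lt hdeg _) (DD_lt hdeg hξ (by omega)) (kabs_nonneg _) (kabs_nonneg _)
  have hMp : 0 < kabs Fq (MM ξ A B) := by rw [hMabs]; linarith
  have hM0 : MM ξ A B ≠ 0 := fun h0 => by rw [h0, kabs_zero] at hMp; exact lt_irrefl _ hMp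
  have hL0 : LL ξ A B E ≠ 0 := by
    apply LL_ne_zero hdeg hnup hξ
    rintro ⟨h1, h2, h3⟩
    apply hM0
    rw [h1, h2]
    simp [MM]
  have hgi := gg_iter t h
  have hgi' : (gg b (r + t) : ℝ) + gg b (r + s) = gg b (r + s + t) + gg b r := by exact_mod_cast hgi
  have hLabs : kabs Fq (LL ξ A B E) ≤ qq Fq ^ (-(2 * (gg b (r + s + t) : ℝ) + gg b r - gg b (r + s))) := by
    have hle : kabs Fq (LL ξ A B E) ≤ (qq Fq ^ gg b (r + t))⁻¹ * (qq Fq ^ gg b (r + s + t))⁻¹ := by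
      rw [hLL, ← W_iter ξ t h]
      apply kabs_sub_le'
      · rw [kabs_mul, ← DD_abs hdeg hξ, ← DD_abs hdeg hξ]
        exact mul_le_mul le_rfl (DD_lt hdeg hξ (by omega)).le (kabs_nonneg _) (kabs_nonneg _)
      · rw [kabs_mul, ← DD_abs hdeg hξ, ← DD_abs hdeg hξ]
        exact mul_le_mul (DD_lt hdeg hξ (by omega)).le le_rfl (kabs_nonneg _) (kabs_nonneg _)
    refine hle.trans (le_of_eq ?_)
    rw [← mul_inv, ← pow_add, Real.rpow_neg hqp.le, ← Real.rpow_natCast]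
    congr 2
    push_cast
    linarith
  have hMr : kabs Fq (MM ξ A B) = qq Fq ^ ((gg b (r+s) : ℝ) - gg b r) := by
    rw [hMabs, Real.rpow_sub hqp, Real.rpow_natCast, Real.rpow_natCast, div_eq_mul_inv]
  have hH : ∀ y : ℝ, y ≤ (gg b r : ℝ) + gg b (r+s) → qq Fq ^ y ≤ qq Fq ^ ((gg b r : ℝ) + gg b (r + s)) :=
    fun y hy => Real.rpow_le_rpow_of_exponent_le hq.le hy
  refine ⟨A, B, E, hL0, hM0, ?_, hLabs, ?_⟩
  · have hAabs : kabs Fq (polyToK Fq A) ≤ qq Fq ^ ((gg b r : ℝ) + gg b (r + s)) := by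
      have e : qq Fq ^ ((gg b r : ℝ) + gg b (r + s)) = qq Fq ^ gg b r * qq Fq ^ gg b (r+s) := by
        rw [Real.rpow_add hqp, Real.rpow_natCast, Real.rpow_natCast]
      rw [hA, map_sub, map_mul, map_mul, e]
      apply kabs_sub_le'
      · rw [kabs_mul, Qs_abs hdeg (r+s)]
        have := (Qs_abs_lt hdeg r).le
        gcongr
      · rw [kabs_mul, Qs_abs hdeg r]
        have := (Qs_abs_lt hdeg (r+s)).le
        gcongr
    have hM' : kabs Fq (MM ξ A B) ≤ qq Fq ^ ((gg b r : ℝ) + gg b (r + s)) := by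
      rw [hMr]
      apply hH
      have : (0 : ℝ) ≤ gg b r := Nat.cast_nonneg _
      linarith
    have hL' : kabs Fq (LL ξ A B E) ≤ qq Fq ^ ((gg b r : ℝ) + gg b (r + s)) := by
      refine hLabs.trans (hH _ ?_)
      have h1 : (0 : ℝ) ≤ gg b r := Nat.cast_nonneg _
      have h2 : (0 : ℝ) ≤ gg b (r + s + t) := Nat.cast_nonneg _
      linarith
    obtain ⟨hB', hE'⟩ := coeffs_le hxi hL' hM' hAabs
    exact Hpoly_tri_le hAabs hB' hE'
  · rw [div_le_iff₀ hMp, hMr, ← Real.rpow_add hqp]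
    refine hLabs.trans (le_of_eq ?_)
    congr 1
    ring

lemma un_bounds {b : ℕ → Polynomial Fq} (hdeg : ∀ n, 1 ≤ (b n).natDegree) {n : ℕ} (hn : 1 ≤ n) :
    kabs Fq (polyToK Fq (qden Fq b n)) ^ ((n : ℝ)⁻¹) = qq Fq ^ ((gg b n : ℝ) / n) := by
  have h : kabs Fq (polyToK Fq (qden Fq b n)) = qq Fq ^ gg b n := Qs_abs hdeg n
  rw [h, ← Real.rpow_natCast, ← Real.rpow_mul (qq_pos Fq).le, div_eq_mul_inv]

lemma growth {b : ℕ → Polynomial Fq} (hdeg : ∀ n, 1 ≤ (b n).natDegree)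
    (hbdd : ∃ C : ℝ, ∀ n : ℕ, 1 ≤ n → kabs Fq (polyToK Fq (qden Fq b n)) ^ ((n : ℝ)⁻¹) ≤ C)
    (m M : ℝ)
    (hm : m = Filter.liminf
      (fun n : ℕ => kabs Fq (polyToK Fq (qden Fq b n)) ^ ((n : ℝ)⁻¹)) Filter.atTop)
    (hM : M = Filter.limsup
      (fun n : ℕ => kabs Fq (polyToK Fq (qden Fq b n)) ^ ((n : ℝ)⁻¹)) Filter.atTop) :
    qq Fq ≤ m ∧ m ≤ M ∧
    (∀ μ, μ < Real.log m / Real.log (qq Fq) → ∃ C : ℝ, 0 ≤ C ∧ ∀ n : ℕ, μ * n - C ≤ gg b n) ∧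
    (∀ ν, Real.log M / Real.log (qq Fq) < ν → ∃ C : ℝ, 0 ≤ C ∧ ∀ n : ℕ, (gg b n : ℝ) ≤ ν * n + C) := by
  have hq := one_lt_qq Fq
  have hqp := qq_pos Fq
  have hlq := Real.log_pos hq
  set u := (fun n : ℕ => kabs Fq (polyToK Fq (qden Fq b n)) ^ ((n : ℝ)⁻¹)) with hu
  have hun : ∀ n, 1 ≤ n → u n = qq Fq ^ ((gg b n : ℝ) / n) := fun n hn => un_bounds hdeg hn
  have hge : ∀ᶠ n in atTop, qq Fq ≤ u n := by
    filter_upwards [eventually_ge_atTop 1] with n hn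
    rw [hun n hn]
    have hn0 : (0 : ℝ) < n := by exact_mod_cast hn
    calc qq Fq = qq Fq ^ (1 : ℝ) := (Real.rpow_one _).symm
      _ ≤ _ := by
        apply Real.rpow_le_rpow_of_exponent_le hq.le
        rw [one_le_div hn0]
        exact_mod_cast le_gg hdeg n
  obtain ⟨C0, hC0⟩ := hbdd
  have hle : ∀ᶠ n in atTop, u n ≤ C0 := by
    filter_upwards [eventually_ge_atTop 1] with n hn
    exact hC0 n hn
  have hbu : IsBoundedUnder (· ≤ ·) atTop u := ⟨C0, hle⟩
  have hbl : IsBoundedUnder (· ≥ ·) atTop u := ⟨qq Fq, hge⟩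
  have hqm : qq Fq ≤ m := by
    rw [hm]
    exact le_liminf_of_le hbu.isCoboundedUnder_ge hge
  have hmM : m ≤ M := by
    rw [hm, hM]
    exact liminf_le_limsup hbu hbl
  have hmp : 0 < m := hqp.trans_le hqm
  have hMp : 0 < M := hmp.trans_le hmM
  refine ⟨hqm, hmM, ?_, ?_⟩
  · intro μ hμ
    have h1 : qq Fq ^ μ < m := by
      rw [← Real.log_lt_log_iff (Real.rpow_pos_of_pos hqp _) hmp, Real.log_rpow hqp]
      exact (lt_div_iff₀ hlq).mp hμ
    have h2 : ∀ᶠ n in atTop, qq Fq ^ μ < u n := eventually_lt_of_lt_liminf (hm ▸ h1) hbl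
    obtain ⟨n0, hn0⟩ := eventually_atTop.mp h2
    refine ⟨|μ| * (n0 + 1), by positivity, ?_⟩
    intro n
    by_cases hn : n0 + 1 ≤ n
    · have h3 := hn0 n (by omega)
      rw [hun n (by omega), Real.rpow_lt_rpow_left_iff hq, lt_div_iff₀ (by exact_mod_cast (by omega : 0 < n))] at h3
      have : 0 ≤ |μ| * ((n0 : ℝ) + 1) := by positivity
      linarith
    · have h4 : (n : ℝ) ≤ n0 + 1 := by exact_mod_cast (by omega : n ≤ n0 + 1)
      have h5 : μ * n ≤ |μ| * (n0 + 1) :=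
        mul_le_mul (le_abs_self μ) h4 (Nat.cast_nonneg _) (abs_nonneg _)
      have h6 : (0 : ℝ) ≤ gg b n := Nat.cast_nonneg _
      linarith
  · intro ν hν
    have h1 : M < qq Fq ^ ν := by
      rw [← Real.log_lt_log_iff hMp (Real.rpow_pos_of_pos hqp _), Real.log_rpow hqp]
      exact (div_lt_iff₀ hlq).mp hν
    have h2 : ∀ᶠ n in atTop, u n < qq Fq ^ ν := eventually_lt_of_limsup_lt (hM ▸ h1) hbu
    obtain ⟨n0, hn0⟩ := eventually_atTop.mp h2
    have hν0 : 0 ≤ ν := by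
      refine le_trans ?_ hν.le
      exact div_nonneg (Real.log_nonneg (by linarith)) hlq.le
    refine ⟨gg b (n0 + 1), Nat.cast_nonneg _, ?_⟩
    intro n
    by_cases hn : n0 + 1 ≤ n
    · have h3 := hn0 n (by omega)
      rw [hun n (by omega), Real.rpow_lt_rpow_left_iff hq, div_lt_iff₀ (by exact_mod_cast (by omega : 0 < n))] at h3
      have : (0 : ℝ) ≤ gg b (n0 + 1) := Nat.cast_nonneg _
      linarith
    · have h4 : (gg b n : ℝ) ≤ gg b (n0 + 1) := by exact_mod_cast gg_mono b (by omega)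
      have h5 : 0 ≤ ν * n := mul_nonneg hν0 (Nat.cast_nonneg _)
      linarith

/-- Choice of the auxiliary growth rates. -/
lemma choose_rates {lo hi w σ : ℝ} (hhi : 0 < hi) (hw : 0 ≤ w) (hσ : 0 ≤ σ)
    (h : w + 1 < lo / hi * σ) : ∃ μ ν : ℝ, μ < lo ∧ hi < ν ∧ 0 < μ ∧ 0 < ν ∧ (w + 1) * ν < μ * σ := by
  have h1 : (w + 1) * hi < lo * σ := by
    rw [div_mul_eq_mul_div, lt_div_iff₀ hhi] at h
    exact h
  set ε := (lo * σ - (w + 1) * hi) / (2 * (w + 1 + σ)) with hε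
  have hp : 0 < w + 1 + σ := by linarith
  have hε0 : 0 < ε := div_pos (by linarith) (by linarith)
  have hε1 : ε * (2 * (w + 1 + σ)) = lo * σ - (w + 1) * hi := by
    rw [hε, div_mul_cancel₀]
    positivity
  have hν : 0 < hi + ε := by linarith
  have hmain : (w + 1) * (hi + ε) < (lo - ε) * σ := by nlinarith
  refine ⟨lo - ε, hi + ε, by linarith, by linarith, ?_, hν, hmain⟩
  by_contra! hneg
  have : 0 < (w + 1) * (hi + ε) := by positivity
  nlinarith

lemma exists_small {δ : ℝ} (hδ : 0 < δ) : ∃ R : ℕ, ∀ y : ℝ, (R : ℝ) ≤ y → qq Fq ^ (-y) < δ := by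
  have hq := one_lt_qq Fq
  have hlim : Tendsto (fun h : ℕ => ((qq Fq)⁻¹) ^ h) atTop (nhds 0) :=
    tendsto_pow_atTop_nhds_zero_of_lt_one (inv_nonneg.mpr (qq_pos Fq).le)
      (inv_lt_one_of_one_lt₀ (one_lt_qq Fq))
  obtain ⟨h0, hh0⟩ := (hlim.eventually (gt_mem_nhds hδ)).exists
  refine ⟨h0, fun y hy => lt_of_le_of_lt ?_ hh0⟩
  rw [inv_pow, ← Real.rpow_natCast, ← Real.rpow_neg (qq_pos Fq).le]
  exact Real.rpow_le_rpow_of_exponent_le hq.le (by linarith)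

section final

variable {b : ℕ → Polynomial Fq} (hdeg : ∀ n, 1 ≤ (b n).natDegree)
    (hnup : ¬ UltimatelyPeriodic b) {ξ : K Fq} (hξ : IsCFOf Fq ξ (cfA Fq b))
    {lo hi : ℝ} (hhi : 0 < hi)
    (hlo' : ∀ μ, μ < lo → ∃ C : ℝ, 0 ≤ C ∧ ∀ n : ℕ, μ * n - C ≤ gg b n)
    (hhi' : ∀ ν, hi < ν → ∃ C : ℝ, 0 ≤ C ∧ ∀ n : ℕ, (gg b n : ℝ) ≤ ν * n + C)

lemma dio_star {v : L Fq → ℝ} (hv : IsAbsExt Fq v) (hdeg : ∀ n, 1 ≤ (b n).natDegree)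
    (hnup : ¬ UltimatelyPeriodic b) (hξ : IsCFOf Fq ξ (cfA Fq b)) (hhi : 0 < hi)
    (hlo' : ∀ μ, μ < lo → ∃ C : ℝ, 0 ≤ C ∧ ∀ n : ℕ, μ * n - C ≤ gg b n)
    (hhi' : ∀ ν, hi < ν → ∃ C : ℝ, 0 ≤ C ∧ ∀ n : ℕ, (gg b n : ℝ) ≤ ν * n + C)
    {ρ : ℝ} (hρ : 1 ≤ ρ) (hcond : SatisfiesCond b ρ) {w : ℝ} (hw : 0 ≤ w)
    (hwρ : w + 1 < lo / hi * ρ) : (w : EReal) ≤ wStarExp Fq v 2 ξ := by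
  have hq := one_lt_qq Fq
  have hqp := qq_pos Fq
  obtain ⟨μ, ν, hμ, hν, hμ0, hν0, hμν⟩ := choose_rates hhi hw (by linarith) hwρ
  obtain ⟨C1, hC1, hlow⟩ := hlo' μ hμ
  obtain ⟨C2, hC2, hupp⟩ := hhi' ν hν
  apply le_wStar
  intro δ hδ
  obtain ⟨R1, hR1⟩ := exists_small (Fq := Fq) hδ
  obtain ⟨R2, hR2⟩ := exists_nat_ge ((C1 + C2 * (w + 1)) / (μ * ρ - (w + 1) * ν))
  rw [div_le_iff₀ (by linarith)] at hR2
  obtain ⟨r, s, t, hs, hR, hlen, hper⟩ := cond_index hnup hρ hcond (max R1 R2)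
  obtain ⟨A, B, E, hL0, hM0, hH, -, hquo⟩ := dio_poly hdeg hnup hξ hs hper
  obtain ⟨α, h1, h2, h3, h4, h5⟩ := exists_root hv hL0 hM0
  have h6 := h5.trans hquo
  have hRr : (R2 : ℝ) ≤ (r : ℝ) + s := by exact_mod_cast (le_max_right R1 R2).trans hR
  refine ⟨α, h1, h2, h4, ?_, ?_⟩
  · refine lt_of_le_of_lt h6 (hR1 _ ?_)
    have : R1 ≤ 2 * gg b (r + s + t) := by
      have := le_gg hdeg (r + s + t)
      have := (le_max_left R1 R2).trans hR
      omega
    exact_mod_cast this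
  · refine h6.trans ?_
    have hp : 0 < heightAlg Fq α := by linarith [one_le_heightAlg h1]
    have hexp : (w + 1) * ((gg b r : ℝ) + gg b (r + s)) ≤ 2 * gg b (r + s + t) := by
      have ha := hupp r
      have hb := hupp (r + s)
      have hc := hlow (r + s + t)
      push_cast at hb hc
      have hs0 : (0 : ℝ) ≤ s := Nat.cast_nonneg _
      have hr0 : (0 : ℝ) ≤ r := Nat.cast_nonneg _
      have hd : (gg b r : ℝ) + gg b (r + s) ≤ 2 * (ν * (r + s)) + 2 * C2 := by nlinarith
      have he : μ * (ρ * (r + s)) - C1 ≤ gg b (r + s + t) := by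
        have : μ * (ρ * (r + s)) ≤ μ * ((r : ℝ) + s + t) := by gcongr
        linarith
      have hf : (w + 1) * ((gg b r : ℝ) + gg b (r + s)) ≤ (w + 1) * (2 * (ν * (r + s)) + 2 * C2) := by gcongr
      have hg : (R2 : ℝ) * (μ * ρ - (w + 1) * ν) ≤ ((r : ℝ) + s) * (μ * ρ - (w + 1) * ν) :=
        mul_le_mul_of_nonneg_right hRr (by linarith)
      linarith [show (w + 1) * (2 * (ν * ((r : ℝ) + s)) + 2 * C2) = 2 * ((r + s) * ((w + 1) * ν)) + 2 * (C2 * (w + 1)) by ring,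
        show ((r : ℝ) + s) * (μ * ρ - (w + 1) * ν) = μ * (ρ * (r + s)) - (r + s) * ((w + 1) * ν) by ring]
    calc qq Fq ^ (-(2 * (gg b (r + s + t) : ℝ))) ≤ qq Fq ^ (((gg b r : ℝ) + gg b (r + s)) * (-w - 1)) := by
          apply Real.rpow_le_rpow_of_exponent_le hq.le
          linarith
      _ = (qq Fq ^ ((gg b r : ℝ) + gg b (r + s))) ^ (-w - 1) := Real.rpow_mul hqp.le _ _
      _ ≤ _ := Real.rpow_le_rpow_of_nonpos hp (h3.trans hH) (by linarith)

lemma dio_w (hdeg : ∀ n, 1 ≤ (b n).natDegree)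
    (hnup : ¬ UltimatelyPeriodic b) (hξ : IsCFOf Fq ξ (cfA Fq b)) (hhi : 0 < hi)
    (hlo' : ∀ μ, μ < lo → ∃ C : ℝ, 0 ≤ C ∧ ∀ n : ℕ, μ * n - C ≤ gg b n)
    (hhi' : ∀ ν, hi < ν → ∃ C : ℝ, 0 ≤ C ∧ ∀ n : ℕ, (gg b n : ℝ) ≤ ν * n + C)
    {ρ : ℝ} (hρ : 1 ≤ ρ) (hcond : SatisfiesCond b ρ) {w : ℝ} (hw : 0 ≤ w)
    (hwρ : w + 1 < lo / hi * (ρ + 1)) : (w : EReal) ≤ wExp Fq 2 ξ := by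
  have hq := one_lt_qq Fq
  have hqp := qq_pos Fq
  obtain ⟨μ, ν, hμ, hν, hμ0, hν0, hμν⟩ := choose_rates hhi hw (by linarith) hwρ
  obtain ⟨C1, hC1, hlow⟩ := hlo' μ hμ
  obtain ⟨C2, hC2, hupp⟩ := hhi' ν hν
  apply le_wExp
  intro δ hδ
  obtain ⟨R1, hR1⟩ := exists_small (Fq := Fq) hδ
  obtain ⟨R2, hR2⟩ := exists_nat_ge ((4 * C1 + 2 * (C2 * (w + 1))) / (μ * (ρ + 1) - (w + 1) * ν))
  rw [div_le_iff₀ (by linarith)] at hR2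
  obtain ⟨r, s, t, hs, hR, hlen, hper⟩ := cond_index hnup hρ hcond (max R1 R2)
  obtain ⟨A, B, E, hL0, hM0, hH, h6, -⟩ := dio_poly hdeg hnup hξ hs hper
  have hs0 : (0 : ℝ) ≤ s := Nat.cast_nonneg _
  have hr0 : (0 : ℝ) ≤ r := Nat.cast_nonneg _
  have hRr : (R2 : ℝ) ≤ 2 * (r : ℝ) + s := by
    have : (R2 : ℝ) ≤ (r : ℝ) + s := by exact_mod_cast (le_max_right R1 R2).trans hR
    linarith
  refine ⟨tri A B E, tri_natDegree _ _ _, ?_, ?_, ?_⟩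
  · rw [evalK_tri]
    exact kabs_pos hL0
  · rw [evalK_tri]
    refine lt_of_le_of_lt h6 (hR1 _ ?_)
    have h7 : R1 ≤ gg b (r + s + t) := by
      have := le_gg hdeg (r + s + t)
      have := (le_max_left R1 R2).trans hR
      omega
    have h8 : (gg b (r + s) : ℝ) ≤ gg b (r + s + t) := by exact_mod_cast gg_mono b (by omega)
    have h9 : (R1 : ℝ) ≤ gg b (r + s + t) := by exact_mod_cast h7
    have h10 : (0 : ℝ) ≤ gg b r := Nat.cast_nonneg _
    linarith
  · rw [evalK_tri]
    refine h6.trans ?_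
    have hne : tri A B E ≠ 0 := by
      intro h0
      apply hL0
      rw [← evalK_tri, h0]
      simp [evalK]
    have hp : 0 < Hpoly Fq (tri A B E) := by linarith [one_le_Hpoly hne]
    have hexp : (w + 1) * ((gg b r : ℝ) + gg b (r + s)) ≤ 2 * gg b (r + s + t) + 2 * gg b r := by
      have ha := hupp r
      have hb := hupp (r + s)
      have hc := hlow (r + s + t)
      have hc' := hlow r
      push_cast at hb hc
      have hd : (gg b r : ℝ) + gg b (r + s) ≤ ν * (2 * r + s) + 2 * C2 := by linarith
      have he : μ * (2 * (ρ * (r + s)) + 2 * r) - 4 * C1 ≤ 2 * gg b (r + s + t) + 2 * gg b r := by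
        have : μ * (ρ * (r + s)) ≤ μ * ((r : ℝ) + s + t) := by gcongr
        linarith
      have hh : μ * ((ρ + 1) * (2 * r + s)) ≤ μ * (2 * (ρ * (r + s)) + 2 * r) := by
        have : (ρ + 1) * (2 * (r : ℝ) + s) ≤ 2 * (ρ * (r + s)) + 2 * r := by nlinarith
        gcongr
      have hf : (w + 1) * ((gg b r : ℝ) + gg b (r + s)) ≤ (w + 1) * (ν * (2 * r + s) + 2 * C2) := by gcongr
      have hg : (R2 : ℝ) * (μ * (ρ + 1) - (w + 1) * ν) ≤ (2 * (r : ℝ) + s) * (μ * (ρ + 1) - (w + 1) * ν) :=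
        mul_le_mul_of_nonneg_right hRr (by linarith)
      linarith [show (w + 1) * (ν * (2 * (r : ℝ) + s) + 2 * C2) = (2 * r + s) * ((w + 1) * ν) + 2 * (C2 * (w + 1)) by ring,
        show (2 * (r : ℝ) + s) * (μ * (ρ + 1) - (w + 1) * ν) = μ * ((ρ + 1) * (2 * r + s)) - (2 * r + s) * ((w + 1) * ν) by ring]
    calc qq Fq ^ (-(2 * (gg b (r + s + t) : ℝ) + gg b r - gg b (r + s)))
        ≤ qq Fq ^ (((gg b r : ℝ) + gg b (r + s)) * (-w)) := by
          apply Real.rpow_le_rpow_of_exponent_le hq.le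
          linarith
      _ = (qq Fq ^ ((gg b r : ℝ) + gg b (r + s))) ^ (-w) := Real.rpow_mul hqp.le _ _
      _ ≤ _ := Real.rpow_le_rpow_of_nonpos hp hH (by linarith)

end final

/-- Passing from strict lower bounds to the bound itself. -/
lemma ereal_le_of {W : EReal} (h2 : (2 : EReal) ≤ W) {y : ℝ}
    (h : ∀ w : ℝ, 2 < w → w < y → (w : EReal) ≤ W) : (y : EReal) ≤ W := by
  by_cases hy : y ≤ 2
  · refine le_trans ?_ h2
    have e : ((2 : ℝ) : EReal) = 2 := rfl
    rw [← e]
    exact_mod_cast hy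
  · push Not at hy
    apply le_of_forall_lt
    intro c hc
    have hy' : ((2 : ℝ) : EReal) < y := by exact_mod_cast hy
    obtain ⟨w, hw1, hw2⟩ := EReal.lt_iff_exists_real_btwn.mp (max_lt hc hy')
    have h3 : ((2 : ℝ) : EReal) < w := (le_max_right _ _).trans_lt hw1
    exact ((le_max_left _ _).trans_lt hw1).trans_le
      (h w (by exact_mod_cast h3) (by exact_mod_cast hw2))

lemma ereal_final {W D : EReal} (h2 : (2 : EReal) ≤ W) {κ d : ℝ} (hκ : 0 < κ)
    (hD : ∀ y : ℝ, W = y → D ≤ (((y + 1) / κ - d : ℝ) : EReal)) : (κ : EReal) * (D + (d : EReal)) - 1 ≤ W := by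
  induction W with
  | bot => exact absurd (le_bot_iff.mp h2) (by decide)
  | top => exact le_top
  | coe y =>
    have h := hD y rfl
    have h1 : D + (d : EReal) ≤ (((y + 1) / κ : ℝ) : EReal) := by
      calc D + (d : EReal) ≤ (((y + 1) / κ - d : ℝ) : EReal) + (d : EReal) := by gcongr
        _ = _ := by rw [← EReal.coe_add]; congr 1; ring
    have h3 : (κ : EReal) * (D + (d : EReal)) ≤ ((y + 1 : ℝ) : EReal) := by
      calc _ ≤ (κ : EReal) * (((y + 1) / κ : ℝ) : EReal) := by
            apply mul_le_mul_of_nonneg_left h1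
            exact_mod_cast hκ.le
        _ = _ := by rw [← EReal.coe_mul]; congr 1; field_simp
    calc _ ≤ ((y + 1 : ℝ) : EReal) - 1 := EReal.sub_le_sub h3 le_rfl
      _ = ((y + 1 : ℝ) : EReal) - ((1 : ℝ) : EReal) := rfl
      _ = _ := by rw [← EReal.coe_sub]; congr 1; ring

end Aux

theorem stmt4 (Fq : Type) [Field Fq] [Fintype Fq]
    (v : L Fq → ℝ) (hv : IsAbsExt Fq v)
    (b : ℕ → Polynomial Fq) (hdeg : ∀ n, 1 ≤ (b n).natDegree)
    (hnup : ¬ UltimatelyPeriodic b)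
    (ξ : K Fq) (hξ : IsCFOf Fq ξ (cfA Fq b))
    (hbdd : ∃ C : ℝ, ∀ n : ℕ, 1 ≤ n → kabs Fq (polyToK Fq (qden Fq b n)) ^ ((n : ℝ)⁻¹) ≤ C)
    (m M : ℝ)
    (hm : m = Filter.liminf
      (fun n : ℕ => kabs Fq (polyToK Fq (qden Fq b n)) ^ ((n : ℝ)⁻¹)) Filter.atTop)
    (hM : M = Filter.limsup
      (fun n : ℕ => kabs Fq (polyToK Fq (qden Fq b n)) ^ ((n : ℝ)⁻¹)) Filter.atTop) :
    (wStarExp Fq v 2 ξ ≤ wExp Fq 2 ξ ∧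
     (2 : EReal) ≤ wStarExp Fq v 2 ξ ∧
     ((Real.log m / Real.log M : ℝ) : EReal) * dioExp b - 1 ≤ wStarExp Fq v 2 ξ) ∧
    ((∃ l : ℝ, Filter.Tendsto
        (fun n : ℕ => kabs Fq (polyToK Fq (qden Fq b n)) ^ ((n : ℝ)⁻¹))
        Filter.atTop (nhds l)) →
      dioExp b - 1 ≤ wStarExp Fq v 2 ξ) ∧
    ((∃ B : ℝ, ∀ n : ℕ, kabs Fq (polyToK Fq (b n)) ≤ B) →
      ((2 : EReal) ≤ wExp Fq 2 ξ ∧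
       ((Real.log m / Real.log M : ℝ) : EReal) * (dioExp b + 1) - 1 ≤ wExp Fq 2 ξ) ∧
      ((∃ l : ℝ, Filter.Tendsto
          (fun n : ℕ => kabs Fq (polyToK Fq (qden Fq b n)) ^ ((n : ℝ)⁻¹))
          Filter.atTop (nhds l)) →
        dioExp b ≤ wExp Fq 2 ξ)) := by
  have hxi := xi_abs hdeg hξ
  have hirr : ∀ t : Fq[X] × Fq[X] × Fq[X], t ≠ 0 → 0 < Lf ξ t :=
    fun t ht => kabs_pos (LL_ne_zero hdeg hnup hξ (triple_ne.mp ht))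
  have h2 := two_le_wStar hv hxi hirr
  have hle := wStar_le_wExp hv hxi hirr
  have h2' : (2 : EReal) ≤ wExp Fq 2 ξ := h2.trans hle
  obtain ⟨hqm, hmM, hlo, hhi⟩ := growth hdeg hbdd m M hm hM
  have hq1 : 1 < qq Fq := one_lt_qq Fq
  have hlq : 0 < Real.log (qq Fq) := Real.log_pos hq1
  have hlm : 0 < Real.log m := Real.log_pos (hq1.trans_le hqm)
  have hlM : 0 < Real.log M := Real.log_pos (hq1.trans_le (hqm.trans hmM))
  have hlmM : Real.log m ≤ Real.log M := Real.log_le_log (by linarith) hmM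
  have hhi0 : 0 < Real.log M / Real.log (qq Fq) := by positivity
  have hk : Real.log m / Real.log (qq Fq) / (Real.log M / Real.log (qq Fq))
      = Real.log m / Real.log M := div_div_div_cancel_right₀ hlq.ne' _ _
  obtain ⟨κ, hκdef⟩ : ∃ κ : ℝ, κ = Real.log m / Real.log M := ⟨_, rfl⟩
  have hκ0 : 0 < κ := by rw [hκdef]; positivity
  have hκ1 : κ ≤ 1 := by rw [hκdef]; exact (div_le_one hlM).mpr hlmM
  rw [← hκdef] at hk
  have real3 : ∀ ρ : ℝ, SatisfiesCond b ρ →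
      ((κ * ρ - 1 : ℝ) : EReal) ≤ wStarExp Fq v 2 ξ := by
    intro ρ hρ
    refine ereal_le_of h2 fun w hw2 hw => ?_
    have hρ1 : 1 ≤ ρ := by
      by_contra hcon
      push Not at hcon
      nlinarith
    refine dio_star hv hdeg hnup hξ hhi0 hlo hhi hρ1 hρ (by linarith) ?_
    rw [hk]; linarith
  have real4 : ∀ ρ : ℝ, SatisfiesCond b ρ →
      ((κ * (ρ + 1) - 1 : ℝ) : EReal) ≤ wExp Fq 2 ξ := by
    intro ρ hρ
    refine ereal_le_of h2' fun w hw2 hw => ?_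
    have hρ1 : 1 ≤ ρ := by
      by_contra hcon
      push Not at hcon
      nlinarith
    refine dio_w hdeg hnup hξ hhi0 hlo hhi hρ1 hρ (by linarith) ?_
    rw [hk]; linarith
  have main3 : (κ : EReal) * dioExp b - 1 ≤ wStarExp Fq v 2 ξ := by
    have := ereal_final (D := dioExp b) (d := 0) h2 hκ0 (by
      intro y hy
      refine sSup_le ?_
      rintro _ ⟨ρ, rfl, hρ⟩
      have h := real3 ρ hρ
      rw [hy, EReal.coe_le_coe_iff] at h
      rw [EReal.coe_le_coe_iff, sub_zero, le_div_iff₀ hκ0]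
      linarith)
    simpa using this
  have main4 : (κ : EReal) * (dioExp b + 1) - 1 ≤ wExp Fq 2 ξ := by
    refine ereal_final (D := dioExp b) (d := 1) h2' hκ0 ?_
    intro y hy
    refine sSup_le ?_
    rintro _ ⟨ρ, rfl, hρ⟩
    have h := real4 ρ hρ
    rw [hy, EReal.coe_le_coe_iff] at h
    rw [EReal.coe_le_coe_iff, le_sub_iff_add_le, le_div_iff₀ hκ0]
    linarith
  have hconv : (∃ l : ℝ, Filter.Tendsto
        (fun n : ℕ => kabs Fq (polyToK Fq (qden Fq b n)) ^ ((n : ℝ)⁻¹))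
        Filter.atTop (nhds l)) → κ = 1 := by
    rintro ⟨l, hl⟩
    have e1 : m = M := by rw [hm, hM, hl.liminf_eq, hl.limsup_eq]
    rw [hκdef, e1, div_self hlM.ne']
  rw [← hκdef]
  refine ⟨⟨hle, h2, main3⟩, fun hc => ?_, fun _ => ⟨⟨h2', main4⟩, fun hc => ?_⟩⟩
  · have h := main3
    rw [hconv hc] at h
    simpa using h
  · refine sSup_le ?_
    rintro _ ⟨ρ, rfl, hρ⟩
    have h := real4 ρ hρ
    rw [hconv hc] at h
    simpa using h

end Ooto
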